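/- arXiv:1603.04344 — 2 statements merged into one kernel-verified Lean document; each statement's English description precedes it below -/
import Mathlib

section
/- Let conditions A, B, C and D₁ hold, with v_ε = p_ε^{−1} and ν*_ε = p_ε ν_ε. Then the pair (ν*_ε, κ_ε(·)) converges jointly in distribution as ε → 0 to (ν₀, θ₀(·)), where ν₀ is exponentially distributed with parameter 1, θ₀(t) is a nonnegative Lévy process with E e^{−sθ₀(t)} = e^{−tA(s)}, and ν₀ and θ₀(·) are independent; explicitly, for any t ≥ 0, any 0 = t₀ ≤ t₁ ≤ … ≤ t_n < ∞ and any s₁, …, s_n > 0: E 1(ν*_ε > t) exp{−Σ_{r=1}^n s_r(κ_ε(t_r) − κ_ε(t_{r−1}))} → e^{−t} exp{−Σ_{r=1}^n A(s_r)(t_r − t_{r−1})} as ε → 0. -/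
open MeasureTheory Filter Set
open scoped Topology ENNReal

noncomputable section

/-- Condition B: there exists a ring chain of states `c 0, c 1, …, c N = c 0`
containing all states of the phase space, with
`liminf_{ε→0+} p ε (c (k-1)) (c k) > 0` for `k = 1, …, N`. -/
def CondB {m : ℕ} (p : ℝ → Fin m → Fin m → ℝ) : Prop :=
  ∃ N : ℕ, 0 < N ∧ ∃ c : ℕ → Fin m, c N = c 0 ∧
    (∀ i : Fin m, ∃ k ≤ N, c k = i) ∧
    ∀ k < N, 0 < Filter.liminf (fun ε => p ε (c k) (c (k + 1))) (𝓝[>] (0 : ℝ))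

/-- `π` is a stationary distribution of the transition matrix `p`. -/
def IsStationaryDist {m : ℕ} (p : Fin m → Fin m → ℝ) (π : Fin m → ℝ) : Prop :=
  (∀ i, 0 ≤ π i) ∧ (∑ i, π i = 1) ∧ ∀ j, π j = ∑ i, π i * p i j

/-- `p_{ε,i} = P_i(ζ_{ε,1} = 1)`, the probability of occurrence of the rare event during
one transition step, starting from state `i`. -/
def rareP {m : ℕ} {Ω : Type} [MeasurableSpace Ω]
    (Pstart : ℝ → Fin m → Measure Ω) (ζ : ℝ → ℕ → Ω → Bool) (ε : ℝ) (i : Fin m) : ℝ :=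
  (Pstart ε i {ω | ζ ε 1 ω = true}).toReal

/-- `p_ε = Σ_i π_{ε,i} p_{ε,i}`, the stationary average of the rare-event probabilities. -/
def avgRare {m : ℕ} {Ω : Type} [MeasurableSpace Ω]
    (Pstart : ℝ → Fin m → Measure Ω) (ζ : ℝ → ℕ → Ω → Bool) (π : ℝ → Fin m → ℝ)
    (ε : ℝ) : ℝ :=
  ∑ i, π ε i * rareP Pstart ζ ε i

/-- `φ_ε(s) = Σ_i π_{ε,i} E_i e^{−sκ_{ε,1}}`, the stationary average of the Laplace
transforms of the sojourn times. -/
def lapPhi {m : ℕ} {Ω : Type} [MeasurableSpace Ω]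
    (Pstart : ℝ → Fin m → Measure Ω) (κ : ℝ → ℕ → Ω → ℝ) (π : ℝ → Fin m → ℝ)
    (ε s : ℝ) : ℝ :=
  ∑ i, π ε i * ∫ ω, Real.exp (-(s * κ ε 1 ω)) ∂(Pstart ε i)

/-- `ν_ε = min{n ≥ 1 : ζ_{ε,n} = 1}`, the number of steps until the first rare event. -/
def nuRE {Ω : Type} (ζ : ℝ → ℕ → Ω → Bool) (ε : ℝ) (ω : Ω) : ℕ :=
  sInf {n : ℕ | 1 ≤ n ∧ ζ ε n ω = true}

/-- `ξ_ε = Σ_{n=1}^{ν_ε} κ_{ε,n}`, the first-rare-event time. -/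
def xiRE {Ω : Type} (κ : ℝ → ℕ → Ω → ℝ) (ζ : ℝ → ℕ → Ω → Bool) (ε : ℝ) (ω : Ω) : ℝ :=
  ∑ n ∈ Finset.Icc 1 (nuRE ζ ε ω), κ ε n ω

/-- The step-sum reward process `κ_ε(t) = Σ_{n=1}^{[t v_ε]} κ_{ε,n}` with `v_ε = p_ε⁻¹`. -/
def stepSumRE {m : ℕ} {Ω : Type} [MeasurableSpace Ω]
    (Pstart : ℝ → Fin m → Measure Ω) (κ : ℝ → ℕ → Ω → ℝ) (ζ : ℝ → ℕ → Ω → Bool)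
    (π : ℝ → Fin m → ℝ) (ε t : ℝ) (ω : Ω) : ℝ :=
  ∑ n ∈ Finset.Icc 1 (Nat.floor (t * (avgRare Pstart ζ π ε)⁻¹)), κ ε n ω

/-!
After conditioning on the path of the embedded chain, the joint transform of the event `{ν*_ε > t}`
and of the increments of the step-sum process is a product of one-step matrices applied to the
constant vector `1`. These matrices are constant on finitely many blocks of steps, and the matrix
`M` of a block is substochastic and dominated by the stochastic matrix `P` of the embedded chain.
The vector `u = M ^ n 1` decreases in `n` and `M u` differs from `P u` by at most a multiple of
`δ = 1 - π M 1`, so `P u ≤ u + O(δ)`; by uniform irreducibility the oscillation of `u` is `O(δ)`.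
Averaging over the stationary distribution `π` then gives `M ^ n 1 = (1 - δ) ^ n + O(δ + n δ²)`,
which is close to `e^{-nδ}`. Condition D₁ evaluates `δ / p_ε` for the blocks after the time `t`.
By condition C the sojourn time is negligible when the rare event occurs, so forbidding the event,
as is done in the blocks before the time `t`, increases `δ / p_ε` by exactly `1` in the limit.
-/

section SubstochasticMatrix

open Matrix

variable {S : Type*} [Fintype S]

lemma mulVec_le_mulVec_of_nonneg {M : Matrix S S ℝ} (hM : ∀ i j, 0 ≤ M i j) {f g : S → ℝ}
    (hfg : f ≤ g) : M *ᵥ f ≤ M *ᵥ g :=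
  fun i => dotProduct_le_dotProduct_of_nonneg_left hfg (hM i)

lemma abs_sub_dotProduct_le {π : S → ℝ} (hπ : π ∈ stdSimplex ℝ S) {f : S → ℝ} {C : ℝ}
    (hf : ∀ i j, f i - f j ≤ C) (i : S) : |f i - π ⬝ᵥ f| ≤ C := by
  have havg : f i - π ⬝ᵥ f = ∑ j, π j * (f i - f j) := by
    simp only [mul_sub, Finset.sum_sub_distrib, ← Finset.sum_mul, hπ.2, one_mul]
    rfl
  rw [havg]
  calc |∑ j, π j * (f i - f j)| ≤ ∑ j, |π j * (f i - f j)| := Finset.abs_sum_le_sum_abs _ _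
    _ ≤ ∑ j, π j * C := Finset.sum_le_sum fun j _ => by
      rw [abs_mul, abs_of_nonneg (hπ.1 j)]
      gcongr
      · exact hπ.1 j
      · exact abs_sub_le_iff.2 ⟨hf i j, hf j i⟩
    _ = C := by rw [← Finset.sum_mul, hπ.2, one_mul]

variable [DecidableEq S]

/-- Row-substochastic matrices, the transition matrices of Markov chains that may be killed. -/
def rowSubstochastic (S : Type*) [Fintype S] [DecidableEq S] : Submonoid (Matrix S S ℝ) where
  carrier := {M | (∀ i j, 0 ≤ M i j) ∧ M *ᵥ 1 ≤ 1}
  mul_mem' {M N} hM hN := by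
    refine ⟨fun i j => Finset.sum_nonneg fun k _ => mul_nonneg (hM.1 i k) (hN.1 k j), ?_⟩
    rw [← mulVec_mulVec]
    exact (mulVec_le_mulVec_of_nonneg hM.1 hN.2).trans hM.2
  one_mem' := ⟨fun i j => zero_le_one_elem i j, (one_mulVec 1).le⟩

lemma mem_rowSubstochastic_of_mem_Icc {P M : Matrix S S ℝ} (hP : P ∈ rowStochastic ℝ S)
    (hM : ∀ i j, M i j ∈ Icc 0 (P i j)) : M ∈ rowSubstochastic S :=
  ⟨fun i j => (hM i j).1, fun i =>
    (dotProduct_le_dotProduct_of_nonneg_right (fun j => (hM i j).2) zero_le_one).trans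
      (congrFun hP.2 i).le⟩

/-- A quantitative irreducibility condition: every state is reached from every state, in some
number of steps not exceeding `N`, with probability at least `β`. It is meant for families of
stochastic matrices with `N` and `β > 0` common to the family. -/
def ReachesWithin (P : Matrix S S ℝ) (N : ℕ) (β : ℝ) : Prop :=
  ∀ i j, ∃ k ≤ N, β ≤ (P ^ k) i j

variable {P M : Matrix S S ℝ} {π : S → ℝ} {N : ℕ} {β : ℝ}

lemma vecMul_pow_eq_self (hπP : π ᵥ* P = π) (k : ℕ) : π ᵥ* P ^ k = π := by
  induction k with
  | zero => simp
  | succ k ih => rw [pow_succ, ← vecMul_vecMul, ih, hπP]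

lemma ReachesWithin.le_mul_stationary (hreach : ReachesWithin P N β) (hP : P ∈ rowStochastic ℝ S)
    (hπ : π ∈ stdSimplex ℝ S) (hπP : π ᵥ* P = π) (j : S) : β ≤ (N + 1) * π j := by
  have hcol (i : S) : β ≤ ∑ k ∈ Finset.range (N + 1), (P ^ k) i j := by
    obtain ⟨k, hk, hβ⟩ := hreach i j
    exact hβ.trans (Finset.single_le_sum (f := fun k => (P ^ k) i j)
      (fun l _ => (pow_mem hP l).1 i j) (Finset.mem_range_succ_iff.2 hk))
  calc β = ∑ i, π i * β := by rw [← Finset.sum_mul, hπ.2, one_mul]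
    _ ≤ ∑ i, π i * ∑ k ∈ Finset.range (N + 1), (P ^ k) i j :=
      Finset.sum_le_sum fun i _ => mul_le_mul_of_nonneg_left (hcol i) (hπ.1 i)
    _ = ∑ k ∈ Finset.range (N + 1), (π ᵥ* P ^ k) j := by
      simp only [Finset.mul_sum, vecMul, dotProduct]
      exact Finset.sum_comm
    _ = (N + 1) * π j := by simp [vecMul_pow_eq_self hπP]

lemma pow_mulVec_le_add (hP : P ∈ rowStochastic ℝ S) {h : S → ℝ} {F : ℝ}
    (hF : P *ᵥ h ≤ h + F • 1) (k : ℕ) : P ^ k *ᵥ h ≤ h + (k * F) • 1 := by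
  induction k with
  | zero => simp
  | succ k ih =>
    calc P ^ (k + 1) *ᵥ h = P *ᵥ (P ^ k *ᵥ h) := by rw [pow_succ', mulVec_mulVec]
      _ ≤ P *ᵥ (h + (k * F) • 1) := mulVec_le_mulVec_of_nonneg hP.1 ih
      _ = P *ᵥ h + (k * F) • 1 := by rw [mulVec_add, mulVec_smul, hP.2]
      _ ≤ h + F • 1 + (k * F) • 1 := by gcongr
      _ = h + (((k + 1 : ℕ) : ℝ) * F) • 1 := by rw [add_assoc, ← add_smul]; push_cast; ring_nf

/-- The chain run from a minimum point of `h` reaches any other state with probability `β`,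
and `h` grows by at most `F` in mean at each of its at most `N` steps. -/
lemma ReachesWithin.mul_sub_le (hreach : ReachesWithin P N β) (hβ : 0 ≤ β)
    (hP : P ∈ rowStochastic ℝ S) {h : S → ℝ} {F : ℝ} (hF : P *ᵥ h ≤ h + F • 1) (i j : S) :
    β * (h i - h j) ≤ N * F := by
  have : Nonempty S := ⟨i⟩
  obtain ⟨a, ha⟩ := Finite.exists_min h
  obtain ⟨k, hkN, hk⟩ := hreach a i
  have mulVec_sub (l : ℕ) : (P ^ l *ᵥ h) a - h a = ∑ c, (P ^ l) a c * (h c - h a) := by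
    simp only [mul_sub, Finset.sum_sub_distrib, ← Finset.sum_mul,
      sum_row_of_mem_rowStochastic (pow_mem hP l), one_mul]
    rfl
  have growth (l : ℕ) : (P ^ l *ᵥ h) a - h a ≤ l * F := by
    have := pow_mulVec_le_add hP hF l a
    simp only [Pi.add_apply, Pi.smul_apply, Pi.one_apply, smul_eq_mul, mul_one] at this
    linarith
  have term_nonneg (l : ℕ) (c : S) : 0 ≤ (P ^ l) a c * (h c - h a) :=
    mul_nonneg ((pow_mem hP l).1 a c) (sub_nonneg.2 (ha c))
  have hF0 : 0 ≤ F := by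
    simpa using (Finset.sum_nonneg fun c _ => term_nonneg 1 c).trans
      ((mulVec_sub 1).symm.trans_le (growth 1))
  calc β * (h i - h j) ≤ β * (h i - h a) := by gcongr; exact ha j
    _ ≤ (P ^ k) a i * (h i - h a) := by gcongr; exact sub_nonneg.2 (ha i)
    _ ≤ ∑ c, (P ^ k) a c * (h c - h a) :=
      Finset.single_le_sum (fun c _ => term_nonneg k c) (Finset.mem_univ i)
    _ ≤ k * F := (mulVec_sub k).symm.trans_le (growth k)
    _ ≤ N * F := by gcongr

lemma pow_succ_mulVec_one_le (hM : M ∈ rowSubstochastic S) (n : ℕ) :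
    M ^ (n + 1) *ᵥ 1 ≤ M ^ n *ᵥ 1 := by
  rw [pow_succ, ← mulVec_mulVec]
  exact mulVec_le_mulVec_of_nonneg (pow_mem hM n).1 hM.2

/-- The stationary probability of being killed in one step, for a chain that moves and survives
according to the substochastic matrix `M` and is started from the distribution `π`. -/
def meanDefect (π : S → ℝ) (M : Matrix S S ℝ) : ℝ := 1 - π ⬝ᵥ M *ᵥ 1

lemma meanDefect_nonneg (hπ : π ∈ stdSimplex ℝ S) (hM : M ∈ rowSubstochastic S) :
    0 ≤ meanDefect π M := by
  have : π ⬝ᵥ M *ᵥ 1 ≤ π ⬝ᵥ 1 := dotProduct_le_dotProduct_of_nonneg_left hM.2 hπ.1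
  rw [dotProduct_one, hπ.2] at this
  exact sub_nonneg.2 this

lemma meanDefect_le_one (hπ : π ∈ stdSimplex ℝ S) (hM : M ∈ rowSubstochastic S) :
    meanDefect π M ≤ 1 :=
  sub_le_self 1 (dotProduct_nonneg_of_nonneg hπ.1 fun i =>
    dotProduct_nonneg_of_nonneg (hM.1 i) zero_le_one)

lemma mul_one_sub_mulVec_one_le (hπ : π ∈ stdSimplex ℝ S) (hM : M ∈ rowSubstochastic S) (i : S) :
    π i * (1 - (M *ᵥ 1) i) ≤ meanDefect π M := by
  calc π i * (1 - (M *ᵥ 1) i) ≤ ∑ j, π j * (1 - (M *ᵥ 1) j) :=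
        Finset.single_le_sum (f := fun j => π j * (1 - (M *ᵥ 1) j))
          (fun j _ => mul_nonneg (hπ.1 j) (sub_nonneg.2 (hM.2 j))) (Finset.mem_univ i)
    _ = meanDefect π M := by
      simp only [mul_sub, mul_one, Finset.sum_sub_distrib, hπ.2]
      rfl

section Perturbation

variable (hreach : ReachesWithin P N β) (hβ : 0 < β) (hP : P ∈ rowStochastic ℝ S)
  (hπ : π ∈ stdSimplex ℝ S) (hπP : π ᵥ* P = π) (hM : M ∈ rowSubstochastic S)
  (hMP : ∀ i j, M i j ≤ P i j)

include hreach hβ hP hπ hπP hM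

lemma one_sub_mulVec_one_le (i : S) :
    1 - (M *ᵥ 1) i ≤ (N + 1) / β * meanDefect π M := by
  have hβπ := hreach.le_mul_stationary hP hπ hπP i
  have hrow : 0 ≤ 1 - (M *ᵥ 1) i := sub_nonneg.2 (hM.2 i)
  rw [div_mul_eq_mul_div, le_div_iff₀ hβ]
  calc (1 - (M *ᵥ 1) i) * β ≤ (1 - (M *ᵥ 1) i) * ((N + 1) * π i) := by gcongr
    _ = (N + 1) * (π i * (1 - (M *ᵥ 1) i)) := by ring
    _ ≤ (N + 1) * meanDefect π M := by
      gcongr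
      exact mul_one_sub_mulVec_one_le hπ hM i

include hMP

lemma pow_mulVec_one_sub_le (n : ℕ) (i j : S) :
    (M ^ n *ᵥ 1) i - (M ^ n *ᵥ 1) j ≤ N * (N + 1) / β ^ 2 * meanDefect π M := by
  set u := M ^ n *ᵥ 1 with hu
  have hkilled : (P - M) *ᵥ u ≤ ((N + 1) / β * meanDefect π M) • 1 := fun k => by
    calc ((P - M) *ᵥ u) k ≤ ((P - M) *ᵥ 1) k :=
          mulVec_le_mulVec_of_nonneg (fun a b => sub_nonneg.2 (hMP a b)) (pow_mem hM n).2 k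
      _ = 1 - (M *ᵥ 1) k := by rw [sub_mulVec, hP.2]; rfl
      _ ≤ _ := by simpa using one_sub_mulVec_one_le hreach hβ hP hπ hπP hM k
  have hdrift : P *ᵥ u ≤ u + ((N + 1) / β * meanDefect π M) • 1 :=
    calc P *ᵥ u = M ^ (n + 1) *ᵥ 1 + (P - M) *ᵥ u := by
          rw [pow_succ', ← mulVec_mulVec, ← hu, sub_mulVec, add_sub_cancel]
      _ ≤ u + ((N + 1) / β * meanDefect π M) • 1 :=
        add_le_add (pow_succ_mulVec_one_le hM n) hkilled
  have hosc := hreach.mul_sub_le hβ.le hP hdrift i j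
  rw [← le_div_iff₀' hβ] at hosc
  refine hosc.trans_eq ?_
  field_simp

lemma abs_dotProduct_pow_succ_sub_le (n : ℕ) :
    |π ⬝ᵥ M ^ (n + 1) *ᵥ 1 - (1 - meanDefect π M) * (π ⬝ᵥ M ^ n *ᵥ 1)|
      ≤ N * (N + 1) / β ^ 2 * meanDefect π M ^ 2 := by
  set u := M ^ n *ᵥ 1
  set D := π ᵥ* (P - M) with hD
  have hD0 : 0 ≤ D := fun j =>
    dotProduct_nonneg_of_nonneg hπ.1 fun i => sub_nonneg.2 (hMP i j)
  have hDsum : ∑ j, D j = meanDefect π M := by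
    rw [← dotProduct_one, hD, ← dotProduct_mulVec, sub_mulVec, hP.2, dotProduct_sub,
      dotProduct_one, hπ.2, meanDefect]
  have hstep : π ⬝ᵥ M ^ (n + 1) *ᵥ 1 = π ⬝ᵥ u - D ⬝ᵥ u := by
    rw [hD, ← dotProduct_mulVec, sub_mulVec, dotProduct_sub, dotProduct_mulVec π P, hπP,
      sub_sub_cancel, pow_succ', ← mulVec_mulVec]
  have hcentre : π ⬝ᵥ M ^ (n + 1) *ᵥ 1 - (1 - meanDefect π M) * (π ⬝ᵥ u)
      = -∑ j, D j * (u j - π ⬝ᵥ u) := by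
    simp only [mul_sub, Finset.sum_sub_distrib, ← Finset.sum_mul, hDsum, hstep]
    simp only [dotProduct]
    ring
  rw [hcentre, abs_neg]
  calc |∑ j, D j * (u j - π ⬝ᵥ u)| ≤ ∑ j, |D j * (u j - π ⬝ᵥ u)| :=
        Finset.abs_sum_le_sum_abs _ _
    _ ≤ ∑ j, D j * (N * (N + 1) / β ^ 2 * meanDefect π M) := Finset.sum_le_sum fun j _ => by
      rw [abs_mul, abs_of_nonneg (hD0 j)]
      exact mul_le_mul_of_nonneg_left (abs_sub_dotProduct_le hπ
        (pow_mulVec_one_sub_le hreach hβ hP hπ hπP hM hMP n) j) (hD0 j)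
    _ = N * (N + 1) / β ^ 2 * meanDefect π M ^ 2 := by rw [← Finset.sum_mul, hDsum]; ring

lemma abs_dotProduct_pow_sub_pow_le (n : ℕ) :
    |π ⬝ᵥ M ^ n *ᵥ 1 - (1 - meanDefect π M) ^ n|
      ≤ n * (N * (N + 1) / β ^ 2 * meanDefect π M ^ 2) := by
  induction n with
  | zero => simp [dotProduct_one, hπ.2]
  | succ n ih =>
    set δ := meanDefect π M
    have hδ0 : 0 ≤ 1 - δ := sub_nonneg.2 (meanDefect_le_one hπ hM)
    have hδ1 : 1 - δ ≤ 1 := sub_le_self 1 (meanDefect_nonneg hπ hM)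
    have hstep := abs_dotProduct_pow_succ_sub_le hreach hβ hP hπ hπP hM hMP n
    have hcontract : |(1 - δ) * (π ⬝ᵥ M ^ n *ᵥ 1) - (1 - δ) ^ (n + 1)|
        ≤ n * (N * (N + 1) / β ^ 2 * δ ^ 2) := by
      rw [pow_succ', ← mul_sub, abs_mul, abs_of_nonneg hδ0]
      exact (mul_le_of_le_one_left (abs_nonneg _) hδ1).trans ih
    calc |π ⬝ᵥ M ^ (n + 1) *ᵥ 1 - (1 - δ) ^ (n + 1)|
        ≤ |π ⬝ᵥ M ^ (n + 1) *ᵥ 1 - (1 - δ) * (π ⬝ᵥ M ^ n *ᵥ 1)|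
          + |(1 - δ) * (π ⬝ᵥ M ^ n *ᵥ 1) - (1 - δ) ^ (n + 1)| := abs_sub_le _ _ _
      _ ≤ N * (N + 1) / β ^ 2 * δ ^ 2 + n * (N * (N + 1) / β ^ 2 * δ ^ 2) :=
        add_le_add hstep hcontract
      _ = ((n + 1 : ℕ) : ℝ) * (N * (N + 1) / β ^ 2 * δ ^ 2) := by push_cast; ring

theorem abs_pow_mulVec_one_sub_pow_le (n : ℕ) (i : S) :
    |(M ^ n *ᵥ 1) i - (1 - meanDefect π M) ^ n|
      ≤ N * (N + 1) / β ^ 2 * (meanDefect π M + n * meanDefect π M ^ 2) := by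
  have hosc := abs_sub_dotProduct_le hπ
    (pow_mulVec_one_sub_le hreach hβ hP hπ hπP hM hMP n) i
  have havg := abs_dotProduct_pow_sub_pow_le hreach hβ hP hπ hπP hM hMP n
  refine (abs_sub_le _ (π ⬝ᵥ M ^ n *ᵥ 1) _).trans ((add_le_add hosc havg).trans_eq ?_)
  ring

end Perturbation

end SubstochasticMatrix

section Limits

open Matrix

variable {ι : Type*} {l : Filter ι}

lemma abs_one_sub_pow_sub_exp_le {δ : ℝ} (hδ0 : 0 ≤ δ) (hδ1 : δ ≤ 1) (n : ℕ) :
    |(1 - δ) ^ n - Real.exp (-(n * δ))| ≤ n * δ * δ := by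
  have hexp : |(1 - δ) - Real.exp (-δ)| ≤ δ ^ 2 := by
    have h := Real.abs_exp_sub_one_sub_id_le (x := -δ) (by rwa [abs_neg, abs_of_nonneg hδ0])
    rwa [neg_sq, abs_sub_comm, show -δ - (Real.exp (-δ) - 1) = 1 - δ - Real.exp (-δ) by ring] at h
  have hmax : max |1 - δ| |Real.exp (-δ)| ≤ 1 := by
    rw [abs_of_nonneg (sub_nonneg.2 hδ1), Real.abs_exp]
    exact max_le (sub_le_self 1 hδ0) (Real.exp_le_one_iff.2 (neg_nonpos.2 hδ0))
  calc |(1 - δ) ^ n - Real.exp (-(n * δ))| = |(1 - δ) ^ n - Real.exp (-δ) ^ n| := by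
        rw [← Real.exp_nat_mul, mul_neg]
    _ ≤ |(1 - δ) - Real.exp (-δ)| * n * max |1 - δ| |Real.exp (-δ)| ^ (n - 1) :=
      abs_pow_sub_pow_le _ _ _
    _ ≤ δ ^ 2 * n * 1 := by
      gcongr
      exact pow_le_one₀ (le_max_of_le_left (abs_nonneg _)) hmax
    _ = n * δ * δ := by ring

lemma tendsto_one_sub_pow_exp_neg {δ : ι → ℝ} {n : ι → ℕ} {τ : ℝ} (hδ0 : ∀ᶠ ε in l, 0 ≤ δ ε)
    (hδ : Tendsto δ l (𝓝 0)) (hnδ : Tendsto (fun ε => n ε * δ ε) l (𝓝 τ)) :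
    Tendsto (fun ε => (1 - δ ε) ^ n ε) l (𝓝 (Real.exp (-τ))) := by
  have herr : Tendsto (fun ε => n ε * δ ε * δ ε) l (𝓝 0) := by simpa using hnδ.mul hδ
  have hdiff : Tendsto (fun ε => (1 - δ ε) ^ n ε - Real.exp (-(n ε * δ ε))) l (𝓝 0) :=
    squeeze_zero_norm' (by
      filter_upwards [hδ0, hδ.eventually_le_const one_pos] with ε h0 h1
      exact abs_one_sub_pow_sub_exp_le h0 h1 _) herr
  simpa using hdiff.add (Real.continuous_exp.tendsto _ |>.comp hnδ.neg)

variable {S : Type*} [Fintype S]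

lemma tendsto_dotProduct_of_tendsto_const {w f : ι → S → ℝ} {a b : ℝ}
    (hw : ∀ᶠ ε in l, 0 ≤ w ε) (hsum : Tendsto (fun ε => ∑ j, w ε j) l (𝓝 a))
    (hf : ∀ j, Tendsto (fun ε => f ε j) l (𝓝 b)) :
    Tendsto (fun ε => w ε ⬝ᵥ f ε) l (𝓝 (a * b)) := by
  have hsup : Tendsto (fun ε => (∑ j, w ε j) * ∑ j, |f ε j - b|) l (𝓝 0) := by
    have hdev (j : S) : Tendsto (fun ε => |f ε j - b|) l (𝓝 0) := by
      simpa using ((hf j).sub_const b).abs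
    simpa using hsum.mul (tendsto_finsetSum Finset.univ fun j _ => hdev j)
  have herr : Tendsto (fun ε => w ε ⬝ᵥ f ε - (∑ j, w ε j) * b) l (𝓝 0) := by
    refine squeeze_zero_norm' ?_ hsup
    filter_upwards [hw] with ε hw
    have hdev : w ε ⬝ᵥ f ε - (∑ j, w ε j) * b = ∑ j, w ε j * (f ε j - b) := by
      simp only [mul_sub, Finset.sum_sub_distrib, Finset.sum_mul]
      rfl
    rw [hdev, Finset.sum_mul]
    refine (norm_sum_le _ _).trans (Finset.sum_le_sum fun j _ => ?_)
    rw [norm_mul, Real.norm_of_nonneg (hw j)]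
    exact mul_le_mul_of_nonneg_left
      (Finset.single_le_sum (f := fun j => |f ε j - b|) (fun _ _ => abs_nonneg _)
        (Finset.mem_univ j)) (hw j)
  simpa using herr.add (hsum.mul_const b)

variable [DecidableEq S] {P M : ι → Matrix S S ℝ} {π : ι → S → ℝ}

/-- A family of stochastic matrices `P ε` with stationary distributions `π ε` that is, along the
filter `l`, irreducible with bounds common to the family. -/
def IsUniformlyErgodic (l : Filter ι) (P : ι → Matrix S S ℝ) (π : ι → S → ℝ) : Prop :=
  ∃ N : ℕ, ∃ β : ℝ, 0 < β ∧ ∀ᶠ ε in l, P ε ∈ rowStochastic ℝ S ∧ ReachesWithin (P ε) N β ∧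
    π ε ∈ stdSimplex ℝ S ∧ π ε ᵥ* P ε = π ε

lemma IsUniformlyErgodic.congr {P' : ι → Matrix S S ℝ} (herg : IsUniformlyErgodic l P π)
    (hP : P =ᶠ[l] P') : IsUniformlyErgodic l P' π := by
  obtain ⟨N, β, hβ, herg⟩ := herg
  refine ⟨N, β, hβ, ?_⟩
  filter_upwards [herg, hP] with ε herg hP
  rwa [← hP]

theorem IsUniformlyErgodic.tendsto_pow_mulVec_one (herg : IsUniformlyErgodic l P π)
    (hM : ∀ᶠ ε in l, ∀ i j, M ε i j ∈ Icc 0 (P ε i j)) {n : ι → ℕ} {τ : ℝ}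
    (hδ : Tendsto (fun ε => meanDefect (π ε) (M ε)) l (𝓝 0))
    (hnδ : Tendsto (fun ε => n ε * meanDefect (π ε) (M ε)) l (𝓝 τ)) (i : S) :
    Tendsto (fun ε => (M ε ^ n ε *ᵥ 1) i) l (𝓝 (Real.exp (-τ))) := by
  obtain ⟨N, β, hβ, herg⟩ := herg
  have hM : ∀ᶠ ε in l, M ε ∈ rowSubstochastic S ∧ ∀ i j, M ε i j ≤ P ε i j := by
    filter_upwards [herg, hM] with ε ⟨hP, _⟩ hM
    exact ⟨mem_rowSubstochastic_of_mem_Icc hP hM, fun i j => (hM i j).2⟩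
  have hδ0 : ∀ᶠ ε in l, 0 ≤ meanDefect (π ε) (M ε) := by
    filter_upwards [herg, hM] with ε ⟨_, _, hπ, _⟩ ⟨hM, _⟩
    exact meanDefect_nonneg hπ hM
  have hbound : Tendsto (fun ε => N * (N + 1) / β ^ 2 *
      (meanDefect (π ε) (M ε) + n ε * meanDefect (π ε) (M ε) ^ 2)) l (𝓝 0) := by
    have h := (hδ.add (hnδ.mul hδ)).const_mul (N * (N + 1) / β ^ 2)
    rw [mul_zero, add_zero, mul_zero] at h
    exact h.congr fun ε => by ring
  have herr : Tendsto (fun ε => (M ε ^ n ε *ᵥ 1) i - (1 - meanDefect (π ε) (M ε)) ^ n ε) l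
      (𝓝 0) := by
    refine squeeze_zero_norm' ?_ hbound
    filter_upwards [herg, hM] with ε ⟨hP, hreach, hπ, hπP⟩ ⟨hM, hMP⟩
    exact abs_pow_mulVec_one_sub_pow_le hreach hβ hP hπ hπP hM hMP _ i
  simpa using herr.add (tendsto_one_sub_pow_exp_neg hδ0 hδ hnδ)

/-- The product of the one-step matrices `Y ε 0`, `Y ε 1`, … over the first `⌊t / x ε⌋` steps,
i.e. up to time `t` when a step lasts `x ε`. -/
def productUpTo (x : ι → ℝ) (Y : ι → ℕ → Matrix S S ℝ) (t : ℝ) (ε : ι) : Matrix S S ℝ :=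
  ((List.range ⌊t * (x ε)⁻¹⌋₊).map (Y ε)).prod

variable {x : ι → ℝ} {Y : ι → ℕ → Matrix S S ℝ}

lemma productUpTo_eq_mul_pow {a b : ℝ} {ε : ι} {C : Matrix S S ℝ}
    (hab : ⌊a * (x ε)⁻¹⌋₊ ≤ ⌊b * (x ε)⁻¹⌋₊)
    (hYC : ∀ k ∈ Ico ⌊a * (x ε)⁻¹⌋₊ ⌊b * (x ε)⁻¹⌋₊, Y ε k = C) :
    productUpTo x Y b ε
      = productUpTo x Y a ε * C ^ (⌊b * (x ε)⁻¹⌋₊ - ⌊a * (x ε)⁻¹⌋₊) := by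
  obtain ⟨d, hd⟩ := Nat.exists_eq_add_of_le hab
  have hconst : (List.range d).map (fun k => Y ε (⌊a * (x ε)⁻¹⌋₊ + k)) = List.replicate d C := by
    refine (List.map_congr_left fun k hk => hYC _ ⟨Nat.le_add_right _ _, ?_⟩).trans (by simp)
    rw [hd]
    exact Nat.add_lt_add_left (List.mem_range.1 hk) _
  rw [productUpTo, hd, List.range_add, List.map_append, List.prod_append, List.map_map,
    Function.comp_def, hconst, List.prod_replicate, Nat.add_sub_cancel_left, productUpTo]

lemma productUpTo_nonneg {ε : ι} (hY : ∀ k, Y ε k ∈ rowSubstochastic S) (t : ℝ) (i j : S) :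
    0 ≤ productUpTo x Y t ε i j :=
  ((rowSubstochastic S).list_prod_mem (List.forall_mem_map.2 fun k _ => hY k)).1 i j

lemma tendsto_natFloor_mul_inv_mul (hx : Tendsto x l (𝓝[>] 0)) {a : ℝ} (ha : 0 ≤ a) :
    Tendsto (fun ε => ⌊a * (x ε)⁻¹⌋₊ * x ε) l (𝓝 a) := by
  simpa [Function.comp_def] using
    (tendsto_nat_floor_mul_div_atTop ha).comp (tendsto_inv_nhdsGT_zero.comp hx)

lemma IsUniformlyErgodic.tendsto_productUpTo_mulVec_one (herg : IsUniformlyErgodic l P π)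
    (hx : Tendsto x l (𝓝[>] 0)) (hY : ∀ᶠ ε in l, ∀ k, Y ε k ∈ rowSubstochastic S)
    (hM : ∀ᶠ ε in l, ∀ i j, M ε i j ∈ Icc 0 (P ε i j)) {ρ : ℝ}
    (hρ : Tendsto (fun ε => (x ε)⁻¹ * meanDefect (π ε) (M ε)) l (𝓝 ρ)) {a b : ℝ} (ha : 0 ≤ a)
    (hab : a ≤ b)
    (hYM : ∀ᶠ ε in l, ∀ k ∈ Ico ⌊a * (x ε)⁻¹⌋₊ ⌊b * (x ε)⁻¹⌋₊, Y ε k = M ε) {τ : ℝ}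
    (hT : ∀ i, Tendsto (fun ε => (productUpTo x Y a ε *ᵥ 1) i) l (𝓝 (Real.exp (-τ)))) (i : S) :
    Tendsto (fun ε => (productUpTo x Y b ε *ᵥ 1) i) l
      (𝓝 (Real.exp (-(τ + ρ * (b - a))))) := by
  have hx0 : ∀ᶠ ε in l, 0 < x ε := hx.eventually self_mem_nhdsWithin
  have hfloor : ∀ᶠ ε in l, ⌊a * (x ε)⁻¹⌋₊ ≤ ⌊b * (x ε)⁻¹⌋₊ := by
    filter_upwards [hx0] with ε hx0
    gcongr
  have hδ : Tendsto (fun ε => meanDefect (π ε) (M ε)) l (𝓝 0) := by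
    have h := (hx.mono_right nhdsWithin_le_nhds).mul hρ
    rw [zero_mul] at h
    refine h.congr' ?_
    filter_upwards [hx0] with ε hx0
    rw [mul_inv_cancel_left₀ hx0.ne']
  have hsteps : Tendsto (fun ε => ((⌊b * (x ε)⁻¹⌋₊ - ⌊a * (x ε)⁻¹⌋₊ : ℕ) : ℝ)
      * meanDefect (π ε) (M ε)) l (𝓝 (ρ * (b - a))) := by
    have h := hρ.mul ((tendsto_natFloor_mul_inv_mul hx (ha.trans hab)).sub
      (tendsto_natFloor_mul_inv_mul hx ha))
    refine h.congr' ?_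
    filter_upwards [hx0, hfloor] with ε hx0 hfloor
    rw [Nat.cast_sub hfloor]
    field_simp
  have hlimit := tendsto_dotProduct_of_tendsto_const
    (hY.mono fun ε hY => productUpTo_nonneg (x := x) hY a i)
    (by simpa [mulVec, dotProduct] using hT i) (herg.tendsto_pow_mulVec_one hM hδ hsteps)
  rw [neg_add, Real.exp_add]
  refine hlimit.congr' ?_
  filter_upwards [hfloor, hYM] with ε hfloor hYM
  rw [productUpTo_eq_mul_pow hfloor hYM, ← mulVec_mulVec]
  rfl

section Blocks

variable (herg : IsUniformlyErgodic l P π) (hx : Tendsto x l (𝓝[>] 0))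
  (hY : ∀ᶠ ε in l, ∀ k, Y ε k ∈ rowSubstochastic S) {u : ℝ}

include herg hx hY

lemma IsUniformlyErgodic.tendsto_productUpTo_block {K L : ι → Matrix S S ℝ}
    (hK : ∀ᶠ ε in l, ∀ i j, K ε i j ∈ Icc 0 (P ε i j))
    (hL : ∀ᶠ ε in l, ∀ i j, L ε i j ∈ Icc 0 (P ε i j)) {ρ : ℝ}
    (hKρ : Tendsto (fun ε => (x ε)⁻¹ * meanDefect (π ε) (K ε)) l (𝓝 (ρ + 1)))
    (hLρ : Tendsto (fun ε => (x ε)⁻¹ * meanDefect (π ε) (L ε)) l (𝓝 ρ)) {a b : ℝ}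
    (ha : 0 ≤ a) (hab : a ≤ b)
    (hYKL : ∀ᶠ ε in l, ∀ k ∈ Ico ⌊a * (x ε)⁻¹⌋₊ ⌊b * (x ε)⁻¹⌋₊,
      Y ε k = if k < ⌊u * (x ε)⁻¹⌋₊ then K ε else L ε) {τ : ℝ}
    (hT : ∀ i, Tendsto (fun ε => (productUpTo x Y a ε *ᵥ 1) i) l
      (𝓝 (Real.exp (-(τ + min u a))))) (i : S) :
    Tendsto (fun ε => (productUpTo x Y b ε *ᵥ 1) i) l
      (𝓝 (Real.exp (-(τ + ρ * (b - a) + min u b)))) := by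
  set c := max a (min u b) with hc
  have hac : a ≤ c := le_max_left _ _
  have hcb : c ≤ b := max_le hab (min_le_right _ _)
  have hx0 : ∀ᶠ ε in l, 0 < x ε := hx.eventually self_mem_nhdsWithin
  have hYK : ∀ᶠ ε in l, ∀ k ∈ Ico ⌊a * (x ε)⁻¹⌋₊ ⌊c * (x ε)⁻¹⌋₊, Y ε k = K ε := by
    rcases le_total (min u b) a with h | h
    · simp [hc, max_eq_left h]
    · filter_upwards [hYKL, hx0] with ε hYKL hx0 k hk
      rw [hc, max_eq_right h] at hk
      rw [hYKL k ⟨hk.1, hk.2.trans_le (by gcongr; exact min_le_right _ _)⟩,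
        if_pos (hk.2.trans_le (by gcongr; exact min_le_left _ _))]
  have hYL : ∀ᶠ ε in l, ∀ k ∈ Ico ⌊c * (x ε)⁻¹⌋₊ ⌊b * (x ε)⁻¹⌋₊, Y ε k = L ε := by
    rcases le_total u b with h | h
    · have huc : u ≤ c := by rw [hc, min_eq_left h]; exact le_max_right _ _
      filter_upwards [hYKL, hx0] with ε hYKL hx0 k hk
      have hak : ⌊a * (x ε)⁻¹⌋₊ ≤ k := le_trans (by gcongr) hk.1
      have huk : ⌊u * (x ε)⁻¹⌋₊ ≤ k := le_trans (by gcongr) hk.1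
      rw [hYKL k ⟨hak, hk.2⟩, if_neg huk.not_gt]
    · simp [hc, min_eq_right h, max_eq_right hab]
  have hTc := herg.tendsto_productUpTo_mulVec_one hx hY hK hKρ ha hac hYK hT
  have hTb := herg.tendsto_productUpTo_mulVec_one hx hY hL hLρ (ha.trans hac) hcb hYL hTc i
  have hexponent : τ + min u a + (ρ + 1) * (c - a) + ρ * (b - c)
      = τ + ρ * (b - a) + min u b := by
    have hmin : min u a + (c - a) = min u b := by
      rw [hc]
      rcases le_total u a with h | h
      · simp [h, h.trans hab]
      · rw [min_eq_right h, max_eq_right (le_min h hab), add_sub_cancel]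
    linarith
  rwa [hexponent] at hTb

lemma IsUniformlyErgodic.tendsto_productUpTo_blocks (hu : 0 ≤ u) {n : ℕ}
    {K L : ℕ → ι → Matrix S S ℝ}
    (hK : ∀ r < n, ∀ᶠ ε in l, ∀ i j, K r ε i j ∈ Icc 0 (P ε i j))
    (hL : ∀ r < n, ∀ᶠ ε in l, ∀ i j, L r ε i j ∈ Icc 0 (P ε i j)) {ρ : ℕ → ℝ}
    (hKρ : ∀ r < n, Tendsto (fun ε => (x ε)⁻¹ * meanDefect (π ε) (K r ε)) l (𝓝 (ρ r + 1)))
    (hLρ : ∀ r < n, Tendsto (fun ε => (x ε)⁻¹ * meanDefect (π ε) (L r ε)) l (𝓝 (ρ r)))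
    {t : ℕ → ℝ} (ht0 : t 0 = 0) (ht : MonotoneOn t (Iic n))
    (hYKL : ∀ r < n, ∀ᶠ ε in l, ∀ k ∈ Ico ⌊t r * (x ε)⁻¹⌋₊ ⌊t (r + 1) * (x ε)⁻¹⌋₊,
      Y ε k = if k < ⌊u * (x ε)⁻¹⌋₊ then K r ε else L r ε) (i : S) :
    Tendsto (fun ε => (productUpTo x Y (t n) ε *ᵥ 1) i) l
      (𝓝 (Real.exp (-(∑ r ∈ Finset.range n, ρ r * (t (r + 1) - t r) + min u (t n))))) := by
  suffices hprefix : ∀ m ≤ n, ∀ i, Tendsto (fun ε => (productUpTo x Y (t m) ε *ᵥ 1) i) l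
      (𝓝 (Real.exp (-(∑ r ∈ Finset.range m, ρ r * (t (r + 1) - t r) + min u (t m))))) from
    hprefix n le_rfl i
  intro m hm
  induction m with
  | zero => simp [productUpTo, ht0, hu, tendsto_const_nhds]
  | succ m ih =>
    have htm : 0 ≤ t m := ht0.symm.trans_le (ht n.zero_le (m.le_succ.trans hm) m.zero_le)
    rw [Finset.sum_range_succ]
    exact herg.tendsto_productUpTo_block hx hY (hK m hm) (hL m hm) (hKρ m hm) (hLρ m hm) htm
      (ht (m.le_succ.trans hm) hm m.le_succ) (hYKL m hm) (ih (m.le_succ.trans hm))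

end Blocks

end Limits

section MarkedHalfLines

variable (B : Type*)

/-- The rectangles `Iic T ×ˢ {z}`, a π-system generating the σ-algebra of pairs of a real number
and a mark in a countable set `B`. -/
def markedHalfLines : Set (Set (ℝ × B)) :=
  image2 (· ×ˢ ·) (range Iic) (range fun z => {z})

lemma isPiSystem_markedHalfLines : IsPiSystem (markedHalfLines B) := by
  refine isPiSystem_Iic.prod ?_
  rintro _ ⟨z, rfl⟩ _ ⟨z', rfl⟩ h
  obtain rfl : z' = z := by simpa using h
  exact ⟨z', by simp⟩

lemma isCountablySpanning_range_Iic : IsCountablySpanning (range (Iic : ℝ → Set ℝ)) :=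
  ⟨fun n : ℕ => Iic n, fun n => mem_range_self _, by ext x; simpa using exists_nat_ge x⟩

variable [Countable B] [Nonempty B]

lemma isCountablySpanning_range_singleton :
    IsCountablySpanning (range fun z : B => ({z} : Set B)) := by
  obtain ⟨e, he⟩ := exists_surjective_nat B
  exact ⟨fun n => {e n}, fun n => mem_range_self _, by ext z; simpa [eq_comm] using he z⟩

lemma isCountablySpanning_markedHalfLines : IsCountablySpanning (markedHalfLines B) :=
  isCountablySpanning_range_Iic.prod (isCountablySpanning_range_singleton B)

variable [mB : MeasurableSpace B] [MeasurableSingletonClass B]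

omit [Nonempty B] in
lemma generateFrom_range_singleton :
    MeasurableSpace.generateFrom (range fun z : B => ({z} : Set B)) = mB := by
  refine le_antisymm (MeasurableSpace.generateFrom_le ?_) fun s _ => ?_
  · rintro _ ⟨z, rfl⟩
    exact measurableSet_singleton z
  · rw [← biUnion_of_singleton s]
    exact MeasurableSet.biUnion (to_countable s) fun z _ =>
      MeasurableSpace.measurableSet_generateFrom (mem_range_self z)

lemma generateFrom_markedHalfLines :
    MeasurableSpace.generateFrom (markedHalfLines B) = Prod.instMeasurableSpace :=
  generateFrom_eq_prod ((borel_eq_generateFrom_Iic ℝ).symm.trans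
      (BorelSpace.measurable_eq (α := ℝ)).symm)
    (generateFrom_range_singleton B) isCountablySpanning_range_Iic
    (isCountablySpanning_range_singleton B)

variable {B} in
lemma pi_eq_of_markedHalfLines {n : ℕ} {μ : Fin n → Measure (ℝ × B)} [∀ k, IsFiniteMeasure (μ k)]
    {ν : Measure (Fin n → ℝ × B)}
    (h : ∀ (T : Fin n → ℝ) (Z : Fin n → B),
      ν (univ.pi fun k => Iic (T k) ×ˢ {Z k}) = ∏ k, μ k (Iic (T k) ×ˢ {Z k})) :
    ν = Measure.pi μ := by
  obtain ⟨span, hspan, hunion⟩ := isCountablySpanning_markedHalfLines B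
  refine (Measure.pi_eq_generateFrom (fun _ => generateFrom_markedHalfLines B)
    (fun _ => isPiSystem_markedHalfLines B)
    (fun k => ⟨span, hspan, fun _ => measure_lt_top _ _, hunion⟩) fun s hs => ?_).symm
  have hrect (k : Fin n) : ∃ T : ℝ, ∃ z : B, s k = Iic T ×ˢ {z} := by
    obtain ⟨_, ⟨T, rfl⟩, _, ⟨z, rfl⟩, hTz⟩ := hs k
    exact ⟨T, z, hTz.symm⟩
  choose T Z hTZ using hrect
  obtain rfl : s = fun k => Iic (T k) ×ˢ {Z k} := funext hTZ
  exact h T Z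

end MarkedHalfLines

section MarkovRenewal

open Matrix

variable {Ω E S : Type*} [MeasurableSpace Ω] [MeasurableSpace E]

/-- The joint law of the first jump to the state `j` and the first mark `X 1`, started from `i`. -/
def semiMarkovKernel (P : S → Measure Ω) (η : ℕ → Ω → S) (X : ℕ → Ω → E) (i j : S) : Measure E :=
  ((P i).restrict (η 1 ⁻¹' {j})).map (X 1)

/-- Under `P i`, the marks `X 1, X 2, …` attached to the jumps of the chain `η` started from `i`
are independent given the path of the chain, and the mark of a jump from `a` to `b` together with
that jump has the law `Q a b`. The path is given by the states `I` visited after `i`. -/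
def IsMarkovRenewal (P : S → Measure Ω) (η : ℕ → Ω → S) (X : ℕ → Ω → E)
    (Q : S → S → Measure E) : Prop :=
  ∀ (n : ℕ) (i : S) (I : Fin n → S),
    ((P i).restrict ((fun ω (k : Fin n) => η (k + 1) ω) ⁻¹' {I})).map
        (fun ω (k : Fin n) => X (k + 1) ω)
      = Measure.pi fun k : Fin n => Q ((Fin.cons i I : Fin (n + 1) → S) k.castSucc) (I k)

/-- The matrix of integrals of `f` against the kernel `Q`; for the functions `x ↦ e^{-sx}` these
are the Laplace transforms of the kernel. -/
def transformMatrix (Q : S → S → Measure E) (f : E → ℝ) : Matrix S S ℝ :=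
  Matrix.of fun i j => ∫ x, f x ∂Q i j

variable [Fintype S]

lemma sum_setIntegral_fiber [MeasurableSpace S] [MeasurableSingletonClass S] {μ : Measure Ω}
    {W : Ω → S} (hW : Measurable W) {F : Ω → ℝ} (hF : Integrable F μ) :
    ∑ j, ∫ ω in W ⁻¹' {j}, F ω ∂μ = ∫ ω, F ω ∂μ := by
  rw [← integral_iUnion_fintype (fun j => hW (measurableSet_singleton j))
    (pairwise_disjoint_fiber W) (fun j => hF.integrableOn), ← preimage_iUnion, iUnion_of_singleton,
    preimage_univ, setIntegral_univ]

variable [DecidableEq S]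

lemma list_prod_mulVec_one_eq_sum_paths (A : ℕ → Matrix S S ℝ) (n : ℕ) (i : S) :
    (((List.range n).map A).prod *ᵥ 1) i
      = ∑ I : Fin n → S, ∏ k : Fin n, A k ((Fin.cons i I : Fin (n + 1) → S) k.castSucc) (I k) := by
  induction n generalizing A i with
  | zero => simp
  | succ n ih =>
    rw [List.range_succ_eq_map, List.map_cons, List.prod_cons, List.map_map, ← mulVec_mulVec,
      ← (Fin.consEquiv fun _ : Fin (n + 1) => S).sum_comp, Fintype.sum_prod_type]
    refine Finset.sum_congr rfl fun j _ => ?_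
    rw [ih, Finset.mul_sum]
    refine Finset.sum_congr rfl fun I _ => ?_
    rw [Fin.prod_univ_succ]
    simp [Fin.consEquiv]

theorem IsMarkovRenewal.integral_prod_eq [MeasurableSpace S] [MeasurableSingletonClass S]
    {P : S → Measure Ω} {η : ℕ → Ω → S} {X : ℕ → Ω → E} {Q : S → S → Measure E}
    [∀ i j, IsFiniteMeasure (Q i j)] (hren : IsMarkovRenewal P η X Q) (hη : ∀ n, Measurable (η n))
    (hX : ∀ n, Measurable (X n)) {f : ℕ → E → ℝ} (hf : ∀ k, Measurable (f k)) {n : ℕ} {i : S}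
    (hint : Integrable (fun ω => ∏ k ∈ Finset.range n, f k (X (k + 1) ω)) (P i)) :
    ∫ ω, ∏ k ∈ Finset.range n, f k (X (k + 1) ω) ∂P i
      = (((List.range n).map fun k => transformMatrix Q (f k)).prod *ᵥ 1) i := by
  have hpath : Measurable fun ω (k : Fin n) => η (k + 1) ω := measurable_pi_lambda _ fun k => hη _
  have hmarks : Measurable fun ω (k : Fin n) => X (k + 1) ω := measurable_pi_lambda _ fun k => hX _
  have hprod : Measurable fun x : Fin n → E => ∏ k : Fin n, f k (x k) :=
    Finset.measurable_fun_prod _ fun k _ => (hf k).comp (measurable_pi_apply k)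
  rw [list_prod_mulVec_one_eq_sum_paths, ← sum_setIntegral_fiber hpath hint]
  refine Finset.sum_congr rfl fun I _ => ?_
  simp only [Finset.prod_range]
  rw [← integral_map (μ := (P i).restrict _) hmarks.aemeasurable hprod.aestronglyMeasurable,
    hren n i I, integral_fintype_prod_eq_prod (𝕜 := ℝ) (fun k : Fin n => f k)]
  rfl

end MarkovRenewal

section CylinderLaw

variable {Ω S : Type*} [MeasurableSpace Ω] {P : S → Measure Ω} {η : ℕ → Ω → S} {κ : ℕ → Ω → ℝ}
  {ζ : ℕ → Ω → Bool} {Q : S → S → ℝ → Bool → ℝ}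

/-- Started from `i`, the process is the Markov chain with initial state `(i, 0, ·)` and with the
transition probabilities `Q a b T z` of moving from `a` to `b` with a sojourn time at most `T` and
the mark `z`. -/
def HasCylinderLaw (P : S → Measure Ω) (η : ℕ → Ω → S) (κ : ℕ → Ω → ℝ) (ζ : ℕ → Ω → Bool)
    (Q : S → S → ℝ → Bool → ℝ) : Prop :=
  ∀ (n : ℕ) (I : ℕ → S) (T : ℕ → ℝ) (Z : ℕ → Bool),
    P (I 0) {ω | ∀ k ≤ n, η k ω = I k ∧ (1 ≤ k → κ k ω ≤ T k ∧ ζ k ω = Z k)}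
      = ENNReal.ofReal (∏ k ∈ Finset.Icc 1 n, Q (I (k - 1)) (I k) (T k) (Z k))

@[to_additive]
lemma prod_Icc_eq_prod_range_succ {M : Type*} [CommMonoid M] (f : ℕ → M) (n : ℕ) :
    ∏ k ∈ Finset.Icc 1 n, f k = ∏ k ∈ Finset.range n, f (k + 1) := by
  rw [← Finset.Ico_succ_right_eq_Icc, Finset.prod_Ico_eq_prod_range]
  simp [add_comm 1]

variable [MeasurableSpace S] [MeasurableSingletonClass S]

namespace HasCylinderLaw

variable (hcyl : HasCylinderLaw P η κ ζ Q) [∀ i, IsProbabilityMeasure (P i)]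
  (hη : ∀ n, Measurable (η n))

include hcyl hη

lemma ae_initial_eq (i : S) : ∀ᵐ ω ∂P i, η 0 ω = i := by
  refine (mem_ae_iff_prob_eq_one (hη 0 (measurableSet_singleton i))).2 ?_
  change P i {ω | η 0 ω = i} = 1
  simpa using hcyl 0 (fun _ => i) (fun _ => 0) (fun _ => true)

lemma measure_path (n : ℕ) (I : ℕ → S) (T : ℕ → ℝ) (Z : ℕ → Bool) :
    P (I 0) {ω | ∀ k < n, η (k + 1) ω = I (k + 1) ∧ κ (k + 1) ω ≤ T k ∧ ζ (k + 1) ω = Z k}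
      = ENNReal.ofReal (∏ k ∈ Finset.range n, Q (I k) (I (k + 1)) (T k) (Z k)) := by
  have h := hcyl n I (fun k => T (k - 1)) fun k => Z (k - 1)
  rw [prod_Icc_eq_prod_range_succ] at h
  refine (measure_congr ?_).trans h
  filter_upwards [hcyl.ae_initial_eq hη (I 0)] with ω hω
  refine propext ⟨fun hpath k hk => ?_, fun hpath k hk => ?_⟩
  · cases k with
    | zero => exact ⟨hω, by simp⟩
    | succ k => exact ⟨(hpath k hk).1, fun _ => (hpath k hk).2⟩
  · exact ⟨(hpath (k + 1) hk).1, (hpath (k + 1) hk).2 (Nat.le_add_left 1 k)⟩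

variable (hκ : ∀ n, Measurable (κ n)) (hζ : ∀ n, Measurable (ζ n))

include hκ hζ

lemma semiMarkovKernel_apply (i j : S) (T : ℝ) (z : Bool) :
    semiMarkovKernel P η (fun n ω => (κ n ω, ζ n ω)) i j (Iic T ×ˢ {z})
      = ENNReal.ofReal (Q i j T z) := by
  have hrect : MeasurableSet (Iic T ×ˢ {z}) := measurableSet_Iic.prod (measurableSet_singleton z)
  have h := hcyl.measure_path hη 1 (fun k => if k = 0 then i else j) (fun _ => T) (fun _ => z)
  rw [semiMarkovKernel, Measure.map_apply ((hκ 1).prodMk (hζ 1)) hrect,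
    Measure.restrict_apply (((hκ 1).prodMk (hζ 1)) hrect)]
  simp only [Nat.lt_one_iff, forall_eq, zero_add, Finset.prod_range_one, one_ne_zero,
    if_true, if_false] at h
  rw [← h]
  congr 1
  ext ω
  simp [and_comm]

/-- A negative value of `Q` makes the probability of the path up to it vanish, so that the product
of the positive parts of `Q` is the probability of the whole path. -/
lemma measure_path_eq_prod (n : ℕ) (I : ℕ → S) (T : ℕ → ℝ) (Z : ℕ → Bool) :
    P (I 0) {ω | ∀ k < n, η (k + 1) ω = I (k + 1) ∧ κ (k + 1) ω ≤ T k ∧ ζ (k + 1) ω = Z k}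
      = ∏ k ∈ Finset.range n, semiMarkovKernel P η (fun n ω => (κ n ω, ζ n ω)) (I k) (I (k + 1))
          (Iic (T k) ×ˢ {Z k}) := by
  induction n with
  | zero => simp
  | succ n ih =>
    rw [Finset.prod_range_succ, ← ih, hcyl.semiMarkovKernel_apply hη hκ hζ]
    rcases le_or_gt 0 (∏ k ∈ Finset.range n, Q (I k) (I (k + 1)) (T k) (Z k)) with hprod | hprod
    · rw [hcyl.measure_path hη, hcyl.measure_path hη, Finset.prod_range_succ,
        ENNReal.ofReal_mul hprod]
    · have hnull := hcyl.measure_path hη n I T Z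
      rw [ENNReal.ofReal_of_nonpos hprod.le] at hnull
      rw [hnull, zero_mul]
      refine measure_mono_null ?_ hnull
      intro ω h k hk
      exact h k (hk.trans n.lt_succ_self)

theorem isMarkovRenewal :
    IsMarkovRenewal P η (fun n ω => (κ n ω, ζ n ω))
      (semiMarkovKernel P η fun n ω => (κ n ω, ζ n ω)) := by
  intro n i I
  set X : ℕ → Ω → ℝ × Bool := fun n ω => (κ n ω, ζ n ω)
  have hX (k : ℕ) : Measurable (X k) := (hκ k).prodMk (hζ k)
  have hmarks : Measurable fun ω (k : Fin n) => X (k + 1) ω := measurable_pi_lambda _ fun k => hX _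
  have hfin (a b : S) : IsFiniteMeasure (semiMarkovKernel P η X a b) :=
    Measure.isFiniteMeasure_map _ _
  refine pi_eq_of_markedHalfLines fun T Z => ?_
  have hrect : MeasurableSet (univ.pi fun k => Iic (T k) ×ˢ {Z k}) :=
    MeasurableSet.univ_pi fun k => measurableSet_Iic.prod (measurableSet_singleton _)
  set J : ℕ → S := fun k => (Fin.cons i I : Fin (n + 1) → S) (Fin.ofNat (n + 1) k) with hJ
  have h := hcyl.measure_path_eq_prod hη hκ hζ n J
    (fun k => if h : k < n then T ⟨k, h⟩ else 0) fun k => if h : k < n then Z ⟨k, h⟩ else true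
  have hJsucc (k : Fin n) : J (k + 1) = I k := by
    have : Fin.ofNat (n + 1) (k + 1) = k.succ := Fin.ext (Nat.mod_eq_of_lt (by simp))
    rw [hJ]; simp only [this, Fin.cons_succ]
  have hJcast (k : Fin n) : J k = (Fin.cons i I : Fin (n + 1) → S) k.castSucc := by
    have : Fin.ofNat (n + 1) k = k.castSucc := Fin.ext (Nat.mod_eq_of_lt (by omega))
    rw [hJ]; simp only [this]
  rw [Finset.prod_range] at h
  simp only [hJsucc, hJcast, Fin.is_lt, dite_true] at h
  rw [Measure.map_apply hmarks hrect, Measure.restrict_apply (hmarks hrect), ← h]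
  congr 1
  ext ω
  simp only [mem_inter_iff, mem_preimage, mem_univ_pi, mem_prod, mem_Iic, mem_singleton_iff,
    funext_iff, mem_ofPred_eq]
  rw [← forall_and, Fin.forall_iff]
  refine forall₂_congr fun k hk => ?_
  simp only [dif_pos hk, ← hJsucc ⟨k, hk⟩]
  exact and_comm

end HasCylinderLaw

end CylinderLaw

section KilledLaplace

open Matrix

/-- The weight of a step with sojourn time `y.1` and rare-event mark `y.2`: the discount
`e^{-s y.1}`, replaced by `0` when the process is killed by the rare event. -/
def stepWeight (killed : Bool) (s : ℝ) (y : ℝ × Bool) : ℝ :=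
  if killed && y.2 then 0 else Real.exp (-(s * y.1))

lemma measurable_stepWeight (killed : Bool) (s : ℝ) : Measurable (stepWeight killed s) :=
  Measurable.ite ((measurable_from_top (f := fun z => killed && z)).comp measurable_snd
    (measurableSet_singleton true)) measurable_const (by fun_prop)

lemma stepWeight_mem_Icc (killed : Bool) {s : ℝ} (hs : 0 ≤ s) {y : ℝ × Bool} (hy : 0 ≤ y.1) :
    stepWeight killed s y ∈ Icc 0 1 := by
  rw [stepWeight]
  split_ifs
  · simp
  · exact ⟨(Real.exp_pos _).le, Real.exp_le_one_iff.2 (neg_nonpos.2 (mul_nonneg hs hy))⟩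

lemma prod_stepWeight (σ a : ℕ → ℝ) (z : ℕ → Bool) {K n : ℕ} (hK : K ≤ n) :
    ∏ k ∈ Finset.range n, stepWeight (decide (k < K)) (σ k) (a k, z k)
      = {z : ℕ → Bool | ∀ k < K, z k = false}.indicator
          (fun _ => Real.exp (-∑ k ∈ Finset.range n, σ k * a k)) z := by
  by_cases hz : z ∈ {z : ℕ → Bool | ∀ k < K, z k = false}
  · rw [indicator_of_mem hz, ← Finset.sum_neg_distrib, Real.exp_sum]
    refine Finset.prod_congr rfl fun k _ => if_neg ?_
    by_cases hk : k < K
    · simp [hz k hk]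
    · simp [hk]
  · rw [indicator_of_notMem hz]
    rw [mem_ofPred_eq] at hz
    push Not at hz
    obtain ⟨k, hk, hzk⟩ := hz
    refine Finset.prod_eq_zero (Finset.mem_range.2 (hk.trans_le hK)) (if_pos ?_)
    simpa [hk] using hzk

/-- The function on `ℕ` which is equal to `c r` on the block `[N r, N (r + 1))` for `r < n` and
which vanishes outside the blocks. -/
def blockStep (N : ℕ → ℕ) (n : ℕ) (c : ℕ → ℝ) (k : ℕ) : ℝ :=
  ∑ r ∈ Finset.range n, (Ico (N r) (N (r + 1))).indicator (fun _ => c r) k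

section BlockStep

variable {N : ℕ → ℕ} {n : ℕ} (hN : MonotoneOn N (Iic n)) {c : ℕ → ℝ}

lemma blockStep_nonneg (hc : ∀ r < n, 0 ≤ c r) (k : ℕ) : 0 ≤ blockStep N n c k :=
  Finset.sum_nonneg fun _ hr => indicator_nonneg (fun _ _ => hc _ (Finset.mem_range.1 hr)) k

include hN

lemma blockStep_eq {r k : ℕ} (hr : r < n) (hk : k ∈ Ico (N r) (N (r + 1))) :
    blockStep N n c k = c r := by
  rw [blockStep, Finset.sum_eq_single_of_mem r (Finset.mem_range.2 hr), indicator_of_mem hk]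
  intro r' hr' hne
  have hr'n : r' < n := Finset.mem_range.1 hr'
  refine indicator_of_notMem (fun hk' => ?_) _
  rcases hne.lt_or_gt with h | h
  · exact (hk'.2.trans_le (hN hr'n hr.le h)).not_ge hk.1
  · exact (hk.2.trans_le (hN hr hr'n.le h)).not_ge hk'.1

lemma blockStep_eq_zero {k : ℕ} (hk : N n ≤ k) : blockStep N n c k = 0 :=
  Finset.sum_eq_zero fun _ hr => indicator_of_notMem (fun hk' =>
    (hk'.2.trans_le (hN (Finset.mem_range.1 hr) (mem_Iic.2 le_rfl) (Finset.mem_range.1 hr))).not_ge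
      hk) _

lemma sum_blockStep_mul {l : ℕ} (hl : N n ≤ l) (f : ℕ → ℝ) :
    ∑ k ∈ Finset.range l, blockStep N n c k * f k
      = ∑ r ∈ Finset.range n,
          c r * (∑ k ∈ Finset.range (N (r + 1)), f k - ∑ k ∈ Finset.range (N r), f k) := by
  simp only [blockStep, Finset.sum_mul]
  rw [Finset.sum_comm]
  refine Finset.sum_congr rfl fun r hr => ?_
  have hrn : r < n := Finset.mem_range.1 hr
  have hblock : Finset.Ico (N r) (N (r + 1)) ⊆ Finset.range l := fun k hk =>
    Finset.mem_range.2 ((Finset.mem_Ico.1 hk).2.trans_le ((hN hrn (mem_Iic.2 le_rfl) hrn).trans hl))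
  rw [← Finset.sum_Ico_eq_sub _ (hN hrn.le hrn r.le_succ), Finset.mul_sum,
    ← Finset.sum_subset hblock]
  · refine Finset.sum_congr rfl fun k hk => ?_
    have hkr : k ∈ Ico (N r) (N (r + 1)) := Finset.mem_Ico.1 hk
    rw [indicator_of_mem hkr]
  · intro k _ hk
    have hkr : k ∉ Ico (N r) (N (r + 1)) := mt Finset.mem_Ico.2 hk
    rw [indicator_of_notMem hkr, zero_mul]

end BlockStep

variable {Ω E S : Type*} [MeasurableSpace Ω] [MeasurableSpace E] {P : S → Measure Ω}
  {η : ℕ → Ω → S}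

lemma transformMatrix_semiMarkovKernel_apply {X : ℕ → Ω → E} (hX : Measurable (X 1)) {f : E → ℝ}
    (hf : Measurable f) (i j : S) :
    transformMatrix (semiMarkovKernel P η X) f i j = ∫ ω in η 1 ⁻¹' {j}, f (X 1 ω) ∂P i :=
  integral_map hX.aemeasurable hf.aestronglyMeasurable

/-- The matrix with entries `E_i e^{-sκ₁} 1(η₁ = j)`, restricted to the event that the rare event
does not occur at the first step if `killed`. -/
def laplaceMatrix (P : S → Measure Ω) (η : ℕ → Ω → S) (κ : ℕ → Ω → ℝ) (ζ : ℕ → Ω → Bool)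
    (killed : Bool) (s : ℝ) : Matrix S S ℝ :=
  transformMatrix (semiMarkovKernel P η fun n ω => (κ n ω, ζ n ω)) (stepWeight killed s)

variable {κ : ℕ → Ω → ℝ} {ζ : ℕ → Ω → Bool} [∀ i, IsProbabilityMeasure (P i)]
  (hκ : ∀ n, Measurable (κ n)) (hζ : ∀ n, Measurable (ζ n)) (hκ0 : ∀ n ω, 0 ≤ κ n ω)

include hκ hζ hκ0

lemma integrable_stepWeight (killed : Bool) {s : ℝ} (hs : 0 ≤ s) (i : S) :
    Integrable (fun ω => stepWeight killed s (κ 1 ω, ζ 1 ω)) (P i) := by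
  refine Integrable.of_bound (C := 1) ((measurable_stepWeight killed s).comp
    ((hκ 1).prodMk (hζ 1))).aestronglyMeasurable (Eventually.of_forall fun ω => ?_)
  obtain ⟨h0, h1⟩ := stepWeight_mem_Icc killed hs (y := (κ 1 ω, ζ 1 ω)) (hκ0 1 ω)
  rwa [Real.norm_of_nonneg h0]

lemma laplaceMatrix_mem_Icc (killed : Bool) {s : ℝ} (hs : 0 ≤ s) (i j : S) :
    laplaceMatrix P η κ ζ killed s i j ∈ Icc 0 ((P i).real (η 1 ⁻¹' {j})) := by
  have hmem (ω : Ω) := stepWeight_mem_Icc killed hs (y := (κ 1 ω, ζ 1 ω)) (hκ0 1 ω)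
  rw [laplaceMatrix, transformMatrix_semiMarkovKernel_apply ((hκ 1).prodMk (hζ 1))
    (measurable_stepWeight killed s)]
  refine ⟨integral_nonneg fun ω => (hmem ω).1, ?_⟩
  calc ∫ ω in η 1 ⁻¹' {j}, stepWeight killed s (κ 1 ω, ζ 1 ω) ∂P i
      ≤ ∫ _ in η 1 ⁻¹' {j}, (1 : ℝ) ∂P i :=
        integral_mono (integrable_stepWeight hκ hζ hκ0 killed hs i).integrableOn
          (integrable_const 1) fun ω => (hmem ω).2
    _ = (P i).real (η 1 ⁻¹' {j}) := by simp

variable [Fintype S] [MeasurableSpace S] [MeasurableSingletonClass S] (hη : ∀ n, Measurable (η n))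

include hη

lemma laplaceMatrix_mulVec_one (killed : Bool) {s : ℝ} (hs : 0 ≤ s) (i : S) :
    (laplaceMatrix P η κ ζ killed s *ᵥ 1) i = ∫ ω, stepWeight killed s (κ 1 ω, ζ 1 ω) ∂P i := by
  rw [← sum_setIntegral_fiber (hη 1) (integrable_stepWeight hκ hζ hκ0 killed hs i), mulVec,
    dotProduct_one]
  exact Finset.sum_congr rfl fun j _ => transformMatrix_semiMarkovKernel_apply
    (X := fun n ω => (κ n ω, ζ n ω)) ((hκ 1).prodMk (hζ 1)) (measurable_stepWeight killed s) i j

lemma meanDefect_laplaceMatrix_false (w : S → ℝ) {s : ℝ} (hs : 0 ≤ s) :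
    meanDefect w (laplaceMatrix P η κ ζ false s)
      = 1 - ∑ i, w i * ∫ ω, Real.exp (-(s * κ 1 ω)) ∂P i := by
  simp only [meanDefect, dotProduct, laplaceMatrix_mulVec_one hκ hζ hκ0 hη false hs, stepWeight,
    Bool.false_and, Bool.false_eq_true, if_false]

lemma meanDefect_laplaceMatrix_true (w : S → ℝ) {s : ℝ} (hs : 0 ≤ s) :
    meanDefect w (laplaceMatrix P η κ ζ true s)
      = meanDefect w (laplaceMatrix P η κ ζ false s)
        + ∑ i, w i * ∫ ω in {ω | ζ 1 ω = true}, Real.exp (-(s * κ 1 ω)) ∂P i := by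
  have hrare : MeasurableSet {ω | ζ 1 ω = true} := hζ 1 (measurableSet_singleton true)
  have hsplit (i : S) : ∫ ω, stepWeight true s (κ 1 ω, ζ 1 ω) ∂P i
      = ∫ ω, stepWeight false s (κ 1 ω, ζ 1 ω) ∂P i
        - ∫ ω in {ω | ζ 1 ω = true}, Real.exp (-(s * κ 1 ω)) ∂P i := by
    have hdiscount : Integrable (fun ω => Real.exp (-(s * κ 1 ω))) (P i) :=
      integrable_stepWeight hκ hζ hκ0 false hs i
    change _ = ∫ ω, Real.exp (-(s * κ 1 ω)) ∂P i - _
    rw [← integral_indicator hrare, ← integral_sub hdiscount (hdiscount.indicator hrare)]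
    refine integral_congr_ae (Eventually.of_forall fun ω => ?_)
    by_cases h : ζ 1 ω = true <;> simp [stepWeight, indicator, h]
  simp only [meanDefect, dotProduct, laplaceMatrix_mulVec_one hκ hζ hκ0 hη _ hs, hsplit, mul_sub,
    Finset.sum_sub_distrib]
  ring

theorem IsMarkovRenewal.setIntegral_exp_eq [DecidableEq S]
    (hren : IsMarkovRenewal P η (fun n ω => (κ n ω, ζ n ω))
      (semiMarkovKernel P η fun n ω => (κ n ω, ζ n ω)))
    {N : ℕ → ℕ} {n K l : ℕ} (hN : MonotoneOn N (Iic n)) (hNl : N n ≤ l) (hKl : K ≤ l) {c : ℕ → ℝ}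
    (hc : ∀ r < n, 0 ≤ c r) (i : S) :
    ∫ ω in {ω | ∀ k < K, ζ (k + 1) ω = false}, Real.exp (-∑ r ∈ Finset.range n, c r *
        (∑ k ∈ Finset.range (N (r + 1)), κ (k + 1) ω - ∑ k ∈ Finset.range (N r), κ (k + 1) ω)) ∂P i
      = (((List.range l).map fun k =>
          laplaceMatrix P η κ ζ (decide (k < K)) (blockStep N n c k)).prod *ᵥ 1) i := by
  have hX (k : ℕ) : Measurable fun ω => (κ k ω, ζ k ω) := (hκ k).prodMk (hζ k)
  have hfin (a b : S) : IsFiniteMeasure (semiMarkovKernel P η (fun n ω => (κ n ω, ζ n ω)) a b) :=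
    Measure.isFiniteMeasure_map _ _
  have hweight (k : ℕ) : Measurable (stepWeight (decide (k < K)) (blockStep N n c k)) :=
    measurable_stepWeight _ _
  have hnotRare : MeasurableSet {ω | ∀ k < K, ζ (k + 1) ω = false} := by
    simp only [ofPred_forall]
    exact MeasurableSet.iInter fun k => MeasurableSet.iInter fun _ =>
      hζ (k + 1) (measurableSet_singleton false)
  have hint : Integrable (fun ω => ∏ k ∈ Finset.range l,
      stepWeight (decide (k < K)) (blockStep N n c k) (κ (k + 1) ω, ζ (k + 1) ω)) (P i) := by
    refine Integrable.of_bound (C := 1) (Finset.measurable_fun_prod _ fun k _ =>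
      (hweight k).comp (hX (k + 1))).aestronglyMeasurable (Eventually.of_forall fun ω => ?_)
    have hmem (k : ℕ) := stepWeight_mem_Icc (decide (k < K)) (blockStep_nonneg (N := N) hc k)
      (y := (κ (k + 1) ω, ζ (k + 1) ω)) (hκ0 _ ω)
    rw [Real.norm_of_nonneg (Finset.prod_nonneg fun k _ => (hmem k).1)]
    exact Finset.prod_le_one (fun k _ => (hmem k).1) fun k _ => (hmem k).2
  rw [← integral_indicator hnotRare]
  refine Eq.trans (integral_congr_ae (Eventually.of_forall fun ω => ?_))
    (hren.integral_prod_eq hη hX hweight hint)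
  simp only [prod_stepWeight _ _ _ hKl, sum_blockStep_mul hN hNl]
  rfl

end KilledLaplace

section RingChain

open Matrix

variable {S : Type*} [Fintype S] [DecidableEq S] {M : Matrix S S ℝ} (hM : ∀ i j, 0 ≤ M i j)
  {b : ℝ} (hb0 : 0 ≤ b) {c : ℕ → S}

omit [DecidableEq S] in
lemma mul_le_mul_apply_of_nonneg {M' : Matrix S S ℝ} (hM : ∀ i j, 0 ≤ M i j)
    (hM' : ∀ i j, 0 ≤ M' i j) (i j k : S) : M i j * M' j k ≤ (M * M') i k :=
  Finset.single_le_sum (f := fun j => M i j * M' j k)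
    (fun j _ => mul_nonneg (hM i j) (hM' j k)) (Finset.mem_univ j)

include hM hb0

lemma pow_le_pow_apply_of_walk {n : ℕ} (hc : ∀ k < n, b ≤ M (c k) (c (k + 1))) :
    b ^ n ≤ (M ^ n) (c 0) (c n) := by
  induction n with
  | zero => simp
  | succ n ih =>
    rw [pow_succ, pow_succ]
    calc b ^ n * b ≤ (M ^ n) (c 0) (c n) * M (c n) (c (n + 1)) :=
          mul_le_mul (ih fun k hk => hc k (hk.trans n.lt_succ_self)) (hc n n.lt_succ_self) hb0
            (pow_apply_nonneg hM n _ _)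
      _ ≤ (M ^ n * M) (c 0) (c (n + 1)) :=
          mul_le_mul_apply_of_nonneg (pow_apply_nonneg hM n) hM _ _ _

lemma reachesWithin_of_ring (hb1 : b ≤ 1) {N : ℕ} (hring : c N = c 0)
    (hcover : ∀ i, ∃ k ≤ N, c k = i) (hc : ∀ k < N, b ≤ M (c k) (c (k + 1))) :
    ReachesWithin M (2 * N) (b ^ (2 * N)) := by
  intro i j
  obtain ⟨d, hd, rfl⟩ := hcover i
  obtain ⟨e, he, rfl⟩ := hcover j
  have hclose : b ^ (N - d) ≤ (M ^ (N - d)) (c d) (c 0) := by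
    have h := pow_le_pow_apply_of_walk hM hb0 (c := fun k => c (d + k)) (n := N - d)
      fun k hk => hc (d + k) (by omega)
    rwa [Nat.add_sub_cancel' hd, hring] at h
  have hopen : b ^ e ≤ (M ^ e) (c 0) (c e) :=
    pow_le_pow_apply_of_walk hM hb0 fun k hk => hc k (hk.trans_le he)
  refine ⟨N - d + e, by omega, ?_⟩
  calc b ^ (2 * N) ≤ b ^ (N - d + e) := pow_le_pow_of_le_one hb0 hb1 (by omega)
    _ = b ^ (N - d) * b ^ e := pow_add _ _ _
    _ ≤ (M ^ (N - d)) (c d) (c 0) * (M ^ e) (c 0) (c e) :=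
        mul_le_mul hclose hopen (pow_nonneg hb0 e) (pow_apply_nonneg hM _ _ _)
    _ ≤ (M ^ (N - d + e)) (c d) (c e) := by
        rw [pow_add]
        exact mul_le_mul_apply_of_nonneg (pow_apply_nonneg hM _) (pow_apply_nonneg hM _) _ _ _

omit hM hb0 in
lemma exists_eventually_le_of_liminf_pos {ι : Type*} {l : Filter ι} {f : ℕ → ι → ℝ} {N : ℕ}
    (hf : ∀ k < N, ∀ᶠ ε in l, 0 ≤ f k ε) (hlim : ∀ k < N, 0 < liminf (f k) l) :
    ∃ b : ℝ, 0 < b ∧ b ≤ 1 ∧ ∀ᶠ ε in l, ∀ k < N, b ≤ f k ε := by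
  induction N with
  | zero => exact ⟨1, one_pos, le_rfl, by simp⟩
  | succ N ih =>
    obtain ⟨b, hb0, hb1, hb⟩ := ih (fun k hk => hf k (hk.trans N.lt_succ_self))
      fun k hk => hlim k (hk.trans N.lt_succ_self)
    have hN := hlim N N.lt_succ_self
    have hlast : ∀ᶠ ε in l, liminf (f N) l / 2 < f N ε :=
      eventually_lt_of_lt_liminf (half_lt_self hN) ⟨0, eventually_map.2 (hf N N.lt_succ_self)⟩
    refine ⟨min b (liminf (f N) l / 2), lt_min hb0 (half_pos hN), (min_le_left _ _).trans hb1, ?_⟩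
    filter_upwards [hb, hlast] with ε hb hlast k hk
    rcases Nat.lt_succ_iff_lt_or_eq.1 hk with h | rfl
    · exact (min_le_left _ _).trans (hb k h)
    · exact (min_le_right _ _).trans hlast.le

omit hM hb0 in
lemma CondB.isUniformlyErgodic {m : ℕ} {p : ℝ → Fin m → Fin m → ℝ} {π : ℝ → Fin m → ℝ}
    (hB : CondB p) (hp : ∀ᶠ ε in 𝓝[>] (0 : ℝ), Matrix.of (p ε) ∈ rowStochastic ℝ (Fin m))
    (hπ : ∀ᶠ ε in 𝓝[>] (0 : ℝ), IsStationaryDist (p ε) (π ε)) :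
    IsUniformlyErgodic (𝓝[>] 0) (fun ε => Matrix.of (p ε)) π := by
  obtain ⟨N, -, c, hring, hcover, hlim⟩ := hB
  obtain ⟨b, hb0, hb1, hb⟩ :=
    exists_eventually_le_of_liminf_pos (fun k _ => hp.mono fun ε hp => hp.1 _ _) hlim
  refine ⟨2 * N, b ^ (2 * N), pow_pos hb0 _, ?_⟩
  filter_upwards [hp, hπ, hb] with ε hp hπ hb
  exact ⟨hp, reachesWithin_of_ring hp.1 hb0.le hb1 hring hcover hb, ⟨hπ.1, hπ.2.1⟩,
    funext fun j => (hπ.2.2 j).symm⟩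

end RingChain

section RareEvents

open Matrix

lemma integrable_exp_neg_mul_of_nonneg {Ω : Type*} [MeasurableSpace Ω] {μ : Measure Ω}
    [IsFiniteMeasure μ] {Y : Ω → ℝ} (hY : Measurable Y) (hY0 : ∀ ω, 0 ≤ Y ω) {s : ℝ} (hs : 0 ≤ s) :
    Integrable (fun ω => Real.exp (-(s * Y ω))) μ := by
  refine Integrable.of_bound (C := 1) (by fun_prop) (Eventually.of_forall fun ω => ?_)
  rw [Real.norm_of_nonneg (Real.exp_pos _).le]
  exact Real.exp_le_one_iff.2 (neg_nonpos.2 (mul_nonneg hs (hY0 ω)))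

lemma setIntegral_one_sub_exp_le {Ω : Type*} [MeasurableSpace Ω] {μ : Measure Ω}
    [IsFiniteMeasure μ] {Y : Ω → ℝ} (hY : Measurable Y) (hY0 : ∀ ω, 0 ≤ Y ω) {s δ : ℝ}
    (hs : 0 ≤ s) (hδ : 0 ≤ δ) (B : Set Ω) :
    ∫ ω in B, (1 - Real.exp (-(s * Y ω))) ∂μ ≤ s * δ * μ.real B + μ.real ({ω | δ < Y ω} ∩ B) := by
  have htail : MeasurableSet {ω | δ < Y ω} := measurableSet_lt measurable_const hY
  have hpointwise (ω : Ω) :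
      1 - Real.exp (-(s * Y ω)) ≤ s * δ + {ω | δ < Y ω}.indicator (fun _ => (1 : ℝ)) ω := by
    by_cases h : ω ∈ {ω | δ < Y ω}
    · rw [indicator_of_mem h]
      linarith [Real.exp_pos (-(s * Y ω)), mul_nonneg hs hδ]
    · rw [indicator_of_notMem h, add_zero]
      linarith [Real.one_sub_le_exp_neg (s * Y ω), mul_le_mul_of_nonneg_left (not_lt.1 h) hs]
  have hexp : Integrable (fun ω => Real.exp (-(s * Y ω))) (μ.restrict B) :=
    integrable_exp_neg_mul_of_nonneg hY hY0 hs
  have hind : Integrable ({ω | δ < Y ω}.indicator fun _ => (1 : ℝ)) (μ.restrict B) :=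
    (integrable_const 1).indicator htail
  calc ∫ ω in B, (1 - Real.exp (-(s * Y ω))) ∂μ
      ≤ ∫ ω in B, (s * δ + {ω | δ < Y ω}.indicator (fun _ => (1 : ℝ)) ω) ∂μ :=
        integral_mono ((integrable_const 1).sub hexp) ((integrable_const _).add hind) hpointwise
    _ = s * δ * μ.real B + μ.real ({ω | δ < Y ω} ∩ B) := by
        rw [integral_add (integrable_const _) hind, integral_indicator_const _ htail,
          measureReal_restrict_apply htail]
        simp [mul_comm]

lemma measureReal_mul_setIntegral_one_sub_exp_div {Ω : Type*} [MeasurableSpace Ω] {μ : Measure Ω}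
    [IsFiniteMeasure μ] {Y : Ω → ℝ} (hY : Measurable Y) (hY0 : ∀ ω, 0 ≤ Y ω) {s : ℝ} (hs : 0 ≤ s)
    (B : Set Ω) :
    μ.real B * ((∫ ω in B, (1 - Real.exp (-(s * Y ω))) ∂μ) / μ.real B)
      = μ.real B - ∫ ω in B, Real.exp (-(s * Y ω)) ∂μ := by
  rw [mul_div_cancel_of_imp' fun h =>
      setIntegral_measure_zero _ ((measureReal_eq_zero_iff (measure_ne_top _ _)).1 h),
    integral_sub (integrable_const 1) (integrable_exp_neg_mul_of_nonneg hY hY0 hs)]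
  simp

variable {m : ℕ} {Ω : Type} [MeasurableSpace Ω] {l : Filter ℝ} {Pstart : ℝ → Fin m → Measure Ω}
  {η : ℝ → ℕ → Ω → Fin m} {κ : ℝ → ℕ → Ω → ℝ} {ζ : ℝ → ℕ → Ω → Bool} {π : ℝ → Fin m → ℝ}

lemma rareP_nonneg (ε : ℝ) (i : Fin m) : 0 ≤ rareP Pstart ζ ε i :=
  ENNReal.toReal_nonneg

lemma IsUniformlyErgodic.tendsto_avgRare {P : ℝ → Matrix (Fin m) (Fin m) ℝ}
    (herg : IsUniformlyErgodic l P π) (hA1 : ∀ᶠ ε in l, ∃ i, 0 < rareP Pstart ζ ε i)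
    (hA2 : ∀ i, Tendsto (fun ε => rareP Pstart ζ ε i) l (𝓝 0)) :
    Tendsto (avgRare Pstart ζ π) l (𝓝[>] 0) := by
  obtain ⟨N, β, hβ, herg⟩ := herg
  have hπ : ∀ᶠ ε in l, ∑ i, π ε i = 1 := herg.mono fun ε h => h.2.2.1.2
  have hlimit : Tendsto (avgRare Pstart ζ π) l (𝓝 (1 * 0)) :=
    tendsto_dotProduct_of_tendsto_const (herg.mono fun ε h => h.2.2.1.1)
      (tendsto_const_nhds.congr' (hπ.mono fun ε h => h.symm)) hA2
  rw [mul_zero] at hlimit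
  refine tendsto_nhdsWithin_iff.2 ⟨hlimit, ?_⟩
  filter_upwards [herg, hA1] with ε ⟨hP, hreach, hπ, hstat⟩ ⟨i, hi⟩
  have hπi : 0 < π ε i :=
    pos_of_mul_pos_right (hβ.trans_le (hreach.le_mul_stationary hP hπ hstat i)) (by positivity)
  exact (mul_pos hπi hi).trans_le (Finset.single_le_sum (f := fun i => π ε i * rareP Pstart ζ ε i)
    (fun j _ => mul_nonneg (hπ.1 j) (rareP_nonneg ε j)) (Finset.mem_univ i))

variable [∀ ε i, IsProbabilityMeasure (Pstart ε i)] (hκ : ∀ ε n, Measurable (κ ε n))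
  (hκ0 : ∀ ε n ω, 0 ≤ κ ε n ω)
  (hC : ∀ i : Fin m, ∀ δ > 0, Tendsto
    (fun ε => (Pstart ε i {ω | δ < κ ε 1 ω ∧ ζ ε 1 ω = true}).toReal / rareP Pstart ζ ε i) l (𝓝 0))
  {s : ℝ} (hs : 0 ≤ s)

include hκ hκ0 hC hs

lemma tendsto_setIntegral_one_sub_exp_div_rareP (i : Fin m) :
    Tendsto (fun ε => (∫ ω in {ω | ζ ε 1 ω = true}, (1 - Real.exp (-(s * κ ε 1 ω))) ∂Pstart ε i)
      / rareP Pstart ζ ε i) l (𝓝 0) := by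
  have hnonneg (ε : ℝ) : 0 ≤ (∫ ω in {ω | ζ ε 1 ω = true}, (1 - Real.exp (-(s * κ ε 1 ω)))
      ∂Pstart ε i) / rareP Pstart ζ ε i :=
    div_nonneg (integral_nonneg fun ω => sub_nonneg.2 (Real.exp_le_one_iff.2
      (neg_nonpos.2 (mul_nonneg hs (hκ0 ε 1 ω))))) (rareP_nonneg ε i)
  refine tendsto_order.2 ⟨fun a ha => Eventually.of_forall fun ε => ha.trans_le (hnonneg ε),
    fun a ha => ?_⟩
  set δ := a / (s + 1) with hδ
  have hδ0 : 0 < δ := by positivity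
  have hsδ : s * δ + δ = a := by rw [hδ]; field_simp
  filter_upwards [(hC i δ hδ0).eventually_lt_const hδ0] with ε hε
  rcases (rareP_nonneg (Pstart := Pstart) (ζ := ζ) ε i).eq_or_lt' with hzero | hpos
  · rwa [hzero, div_zero]
  · rw [div_lt_iff₀ hpos] at hε ⊢
    have hle := setIntegral_one_sub_exp_le (μ := Pstart ε i) (hκ ε 1) (hκ0 ε 1) hs hδ0.le
      {ω | ζ ε 1 ω = true}
    calc _ ≤ _ := hle
      _ < s * δ * rareP Pstart ζ ε i + δ * rareP Pstart ζ ε i := add_lt_add_right hε _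
      _ = a * rareP Pstart ζ ε i := by rw [← add_mul, hsδ]

variable (hx : Tendsto (avgRare Pstart ζ π) l (𝓝[>] 0)) (hπ : ∀ᶠ ε in l, 0 ≤ π ε)

include hπ hx

/-- Condition C makes the sojourn time at the rare event negligible, so killing at the rare event
costs its full probability. -/
lemma tendsto_inv_avgRare_mul_sum_setIntegral_exp :
    Tendsto (fun ε => (avgRare Pstart ζ π ε)⁻¹ *
      ∑ i, π ε i * ∫ ω in {ω | ζ ε 1 ω = true}, Real.exp (-(s * κ ε 1 ω)) ∂Pstart ε i)
      l (𝓝 1) := by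
  set w : ℝ → Fin m → ℝ := fun ε i => (avgRare Pstart ζ π ε)⁻¹ * (π ε i * rareP Pstart ζ ε i)
    with hw
  have hx0 : ∀ᶠ ε in l, 0 < avgRare Pstart ζ π ε := hx.eventually self_mem_nhdsWithin
  have hw0 : ∀ᶠ ε in l, 0 ≤ w ε := by
    filter_upwards [hx0, hπ] with ε hx0 hπ i
    exact mul_nonneg (inv_nonneg.2 hx0.le) (mul_nonneg (hπ i) (rareP_nonneg ε i))
  have hw1 : ∀ᶠ ε in l, ∑ i, w ε i = 1 := by
    filter_upwards [hx0] with ε hx0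
    rw [← Finset.mul_sum]
    exact inv_mul_cancel₀ hx0.ne'
  have hdefect := tendsto_dotProduct_of_tendsto_const hw0
    (tendsto_const_nhds.congr' (hw1.mono fun ε h => h.symm))
    (tendsto_setIntegral_one_sub_exp_div_rareP hκ hκ0 hC hs)
  have hlimit := hdefect.const_sub 1
  rw [mul_zero, sub_zero] at hlimit
  refine hlimit.congr' (hw1.mono fun ε hw1 => ?_)
  have hterm (i : Fin m) : (avgRare Pstart ζ π ε)⁻¹
        * (π ε i * ∫ ω in {ω | ζ ε 1 ω = true}, Real.exp (-(s * κ ε 1 ω)) ∂Pstart ε i)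
      = w ε i - w ε i * ((∫ ω in {ω | ζ ε 1 ω = true}, (1 - Real.exp (-(s * κ ε 1 ω)))
          ∂Pstart ε i) / rareP Pstart ζ ε i) := by
    have hcond : rareP Pstart ζ ε i * ((∫ ω in {ω | ζ ε 1 ω = true},
          (1 - Real.exp (-(s * κ ε 1 ω))) ∂Pstart ε i) / rareP Pstart ζ ε i)
        = rareP Pstart ζ ε i
          - ∫ ω in {ω | ζ ε 1 ω = true}, Real.exp (-(s * κ ε 1 ω)) ∂Pstart ε i :=
      measureReal_mul_setIntegral_one_sub_exp_div (hκ ε 1) (hκ0 ε 1) hs _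
    simp only [hw, mul_assoc]
    rw [hcond]
    ring
  simp only [Finset.mul_sum, hterm, Finset.sum_sub_distrib, hw1]
  rfl

end RareEvents

section Convergence

open Matrix

lemma setIntegral_sum_ofReal_smul {Ω S : Type*} [MeasurableSpace Ω] [Fintype S]
    {P : S → Measure Ω} {B : Set Ω} {F : Ω → ℝ} (hF : ∀ i, IntegrableOn F B (P i)) {q : S → ℝ}
    (hq : 0 ≤ q) :
    ∫ ω in B, F ω ∂(∑ i, ENNReal.ofReal (q i) • P i) = q ⬝ᵥ fun i => ∫ ω in B, F ω ∂P i := by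
  rw [← Measure.sum_fintype, Measure.restrict_sum_of_countable, Measure.sum_fintype,
    integral_finsetSum_measure]
  · refine Finset.sum_congr rfl fun i _ => ?_
    rw [Measure.restrict_smul, integral_smul_measure, ENNReal.toReal_ofReal (hq i), smul_eq_mul]
  · intro i _
    rw [Measure.restrict_smul]
    exact (hF i).smul_measure ENNReal.ofReal_ne_top

lemma of_measureReal_preimage_singleton_mem_rowStochastic {Ω S : Type*} [MeasurableSpace Ω]
    [Fintype S] [DecidableEq S] [MeasurableSpace S] [MeasurableSingletonClass S]
    {P : S → Measure Ω} [∀ i, IsProbabilityMeasure (P i)] {f : Ω → S} (hf : Measurable f) :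
    (Matrix.of fun i j => (P i).real (f ⁻¹' {j})) ∈ rowStochastic ℝ S := by
  refine ⟨fun _ _ => measureReal_nonneg, funext fun i => ?_⟩
  rw [mulVec, dotProduct_one]
  simpa using sum_setIntegral_fiber hf (integrable_const (μ := P i) (1 : ℝ))

lemma forall_mul_le_iff_forall_lt_floor {x u : ℝ} (hx : 0 < x) (hu : 0 ≤ u) (z : ℕ → Bool) :
    (∀ n : ℕ, 1 ≤ n → x * n ≤ u → z n = false) ↔ ∀ k < ⌊u * x⁻¹⌋₊, z (k + 1) = false := by
  have hfloor (n : ℕ) : n ≤ ⌊u * x⁻¹⌋₊ ↔ x * n ≤ u := by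
    rw [Nat.le_floor_iff (by positivity), ← div_eq_mul_inv, le_div_iff₀ hx, mul_comm]
  constructor
  · exact fun h k hk => h (k + 1) (Nat.le_add_left 1 k) ((hfloor _).1 hk)
  · intro h n hn hnu
    obtain ⟨k, rfl⟩ := Nat.exists_eq_add_of_le' hn
    exact h k ((hfloor _).2 hnu)

lemma monotoneOn_natFloor_mul_inv {t : ℕ → ℝ} {n : ℕ} (ht : MonotoneOn t (Iic n)) {x : ℝ}
    (hx : 0 < x) : MonotoneOn (fun r => ⌊t r * x⁻¹⌋₊) (Iic n) :=
  fun _ hr _ hr' h =>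
    Nat.floor_mono (mul_le_mul_of_nonneg_right (ht hr hr' h) (inv_nonneg.2 hx.le))

lemma IsUniformlyErgodic.eventually_mem_rowStochastic {ι S : Type*} [Fintype S] [DecidableEq S]
    {l : Filter ι} {P : ι → Matrix S S ℝ} {π : ι → S → ℝ} (herg : IsUniformlyErgodic l P π) :
    ∀ᶠ ε in l, P ε ∈ rowStochastic ℝ S := by
  obtain ⟨_, _, _, herg⟩ := herg
  exact herg.mono fun ε h => h.1

lemma IsUniformlyErgodic.tendsto_productUpTo_blockStep {ι S : Type*} [Fintype S] [DecidableEq S]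
    {l : Filter ι} {P : ι → Matrix S S ℝ} {π : ι → S → ℝ} {x : ι → ℝ}
    (herg : IsUniformlyErgodic l P π) (hx : Tendsto x l (𝓝[>] 0))
    {M : ι → Bool → ℝ → Matrix S S ℝ}
    (hM : ∀ᶠ ε in l, ∀ d, ∀ s ≥ 0, ∀ i j, M ε d s i j ∈ Icc 0 (P ε i j))
    {n : ℕ} {c ρ : ℕ → ℝ} (hc : ∀ r < n, 0 ≤ c r)
    (hρ : ∀ r < n, Tendsto (fun ε => (x ε)⁻¹ * meanDefect (π ε) (M ε false (c r))) l (𝓝 (ρ r)))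
    (hρ0 : Tendsto (fun ε => (x ε)⁻¹ * meanDefect (π ε) (M ε false 0)) l (𝓝 0))
    (hkill : ∀ s ≥ 0, Tendsto (fun ε => (x ε)⁻¹ *
      (meanDefect (π ε) (M ε true s) - meanDefect (π ε) (M ε false s))) l (𝓝 1))
    {t : ℕ → ℝ} (ht0 : t 0 = 0) (ht : MonotoneOn t (Iic n)) {u : ℝ} (hu : 0 ≤ u) (i : S) :
    Tendsto (fun ε => (productUpTo x (fun ε k => M ε (decide (k < ⌊u * (x ε)⁻¹⌋₊))
        (blockStep (fun r => ⌊t r * (x ε)⁻¹⌋₊) n c k)) (max (t n) u) ε *ᵥ 1) i) l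
      (𝓝 (Real.exp (-(∑ r ∈ Finset.range n, ρ r * (t (r + 1) - t r) + u)))) := by
  set Y : ι → ℕ → Matrix S S ℝ := fun ε k => M ε (decide (k < ⌊u * (x ε)⁻¹⌋₊))
    (blockStep (fun r => ⌊t r * (x ε)⁻¹⌋₊) n c k) with hYdef
  have hY : ∀ᶠ ε in l, ∀ k, Y ε k ∈ rowSubstochastic S := by
    filter_upwards [hM, herg.eventually_mem_rowStochastic] with ε hM hP k
    exact mem_rowSubstochastic_of_mem_Icc hP (hM _ _ (blockStep_nonneg hc k))
  have hmono : ∀ᶠ ε in l, MonotoneOn (fun r => ⌊t r * (x ε)⁻¹⌋₊) (Iic n) :=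
    (hx.eventually self_mem_nhdsWithin).mono fun ε => monotoneOn_natFloor_mul_inv ht
  have hMc (d : Bool) (s : ℝ) (hs : 0 ≤ s) : ∀ᶠ ε in l, ∀ i j, M ε d s i j ∈ Icc 0 (P ε i j) :=
    hM.mono fun ε h => h d s hs
  have hkilled {s a : ℝ} (hs : 0 ≤ s)
      (ha : Tendsto (fun ε => (x ε)⁻¹ * meanDefect (π ε) (M ε false s)) l (𝓝 a)) :
      Tendsto (fun ε => (x ε)⁻¹ * meanDefect (π ε) (M ε true s)) l (𝓝 (a + 1)) := by
    refine (ha.add (hkill s hs)).congr fun ε => ?_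
    ring
  have hYblock : ∀ r < n, ∀ᶠ ε in l, ∀ k ∈ Ico ⌊t r * (x ε)⁻¹⌋₊ ⌊t (r + 1) * (x ε)⁻¹⌋₊,
      Y ε k = if k < ⌊u * (x ε)⁻¹⌋₊ then M ε true (c r) else M ε false (c r) := fun r hr => by
    filter_upwards [hmono] with ε hmono k hk
    rw [hYdef]
    dsimp only
    rw [blockStep_eq hmono hr hk]
    split_ifs with h <;> simp [h]
  have hYtail : ∀ᶠ ε in l, ∀ k ∈ Ico ⌊t n * (x ε)⁻¹⌋₊ ⌊max (t n) u * (x ε)⁻¹⌋₊,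
      Y ε k = if k < ⌊u * (x ε)⁻¹⌋₊ then M ε true 0 else M ε false 0 := by
    filter_upwards [hmono] with ε hmono k hk
    rw [hYdef]
    dsimp only
    rw [blockStep_eq_zero hmono hk.1]
    split_ifs with h <;> simp [h]
  have htn : 0 ≤ t n := ht0.symm.trans_le (ht n.zero_le (mem_Iic.2 le_rfl) n.zero_le)
  have hblocks := herg.tendsto_productUpTo_blocks hx hY hu
    (fun r hr => hMc true _ (hc r hr)) (fun r hr => hMc false _ (hc r hr))
    (fun r hr => hkilled (hc r hr) (hρ r hr)) hρ ht0 ht hYblock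
  have htail := herg.tendsto_productUpTo_block hx hY (hMc true 0 le_rfl) (hMc false 0 le_rfl)
    (hkilled le_rfl hρ0) hρ0 htn (le_max_left _ _) hYtail hblocks i
  simpa using htail

end Convergence

section FirstRareEvent

open Matrix

variable {m : ℕ} {Ω : Type} [MeasurableSpace Ω] {Pstart : ℝ → Fin m → Measure Ω}
  {η : ℝ → ℕ → Ω → Fin m} {κ : ℝ → ℕ → Ω → ℝ} {ζ : ℝ → ℕ → Ω → Bool} {π : ℝ → Fin m → ℝ}

/-- The event `{ν*_ε > u}`, stated without `ν_ε` because `nuRE` is `0` when no rare event ever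
occurs. -/
def noRareEventUpTo (Pstart : ℝ → Fin m → Measure Ω) (ζ : ℝ → ℕ → Ω → Bool) (π : ℝ → Fin m → ℝ)
    (u ε : ℝ) : Set Ω :=
  {ω | ∀ n : ℕ, 1 ≤ n → avgRare Pstart ζ π ε * n ≤ u → ζ ε n ω = false}

/-- The random variable `exp (-∑ᵣ s_r (κ_ε(t_r) - κ_ε(t_{r-1})))`, whose mean is the joint Laplace
transform of the increments of the step-sum process. -/
def expIncrements (Pstart : ℝ → Fin m → Measure Ω) (κ : ℝ → ℕ → Ω → ℝ) (ζ : ℝ → ℕ → Ω → Bool)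
    (π : ℝ → Fin m → ℝ) (n : ℕ) (t s : ℕ → ℝ) (ε : ℝ) (ω : Ω) : ℝ :=
  Real.exp (-(∑ r ∈ Finset.Icc 1 n,
    s r * (stepSumRE Pstart κ ζ π ε (t r) ω - stepSumRE Pstart κ ζ π ε (t (r - 1)) ω)))

lemma expIncrements_eq (n : ℕ) (t s : ℕ → ℝ) (ε : ℝ) (ω : Ω) :
    expIncrements Pstart κ ζ π n t s ε ω
      = Real.exp (-∑ r ∈ Finset.range n, s (r + 1) *
          (∑ k ∈ Finset.range ⌊t (r + 1) * (avgRare Pstart ζ π ε)⁻¹⌋₊, κ ε (k + 1) ω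
            - ∑ k ∈ Finset.range ⌊t r * (avgRare Pstart ζ π ε)⁻¹⌋₊, κ ε (k + 1) ω)) := by
  simp only [expIncrements, stepSumRE, sum_Icc_eq_sum_range_succ, Nat.add_sub_cancel]

section Increments

variable {ε : ℝ} (hx : 0 < avgRare Pstart ζ π ε) (hκ0 : ∀ n ω, 0 ≤ κ ε n ω) {n : ℕ} {t s : ℕ → ℝ}
  (ht : MonotoneOn t (Iic n)) (hs : ∀ r < n, 0 ≤ s (r + 1))

include hx ht hs

include hκ0 in
lemma expIncrements_le_one (ω : Ω) : expIncrements Pstart κ ζ π n t s ε ω ≤ 1 := by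
  rw [expIncrements_eq]
  refine Real.exp_le_one_iff.2 (neg_nonpos.2 (Finset.sum_nonneg fun r hr => ?_))
  have hr : r < n := Finset.mem_range.1 hr
  refine mul_nonneg (hs r hr) (sub_nonneg.2 (Finset.sum_le_sum_of_subset_of_nonneg ?_
    fun k _ _ => hκ0 (k + 1) ω))
  exact Finset.range_mono (monotoneOn_natFloor_mul_inv ht hx hr.le hr r.le_succ)

variable (hκ : ∀ n, Measurable (κ ε n))

include hκ

include hκ0 in
lemma integrable_expIncrements (μ : Measure Ω) [IsFiniteMeasure μ] :
    Integrable (expIncrements Pstart κ ζ π n t s ε) μ := by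
  have hmeas : Measurable (expIncrements Pstart κ ζ π n t s ε) := by
    simp only [funext (expIncrements_eq n t s ε)]
    fun_prop
  refine Integrable.of_bound (C := 1) hmeas.aestronglyMeasurable (Eventually.of_forall fun ω => ?_)
  rw [expIncrements, Real.norm_of_nonneg (Real.exp_pos _).le]
  exact expIncrements_le_one hx hκ0 ht hs ω

lemma setIntegral_expIncrements_eq [∀ i, IsProbabilityMeasure (Pstart ε i)]
    (hη : ∀ n, Measurable (η ε n)) (hζ : ∀ n, Measurable (ζ ε n)) (hκ0 : ∀ n ω, 0 ≤ κ ε n ω)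
    {Q : Fin m → Fin m → ℝ → Bool → ℝ} (hlaw : HasCylinderLaw (Pstart ε) (η ε) (κ ε) (ζ ε) Q)
    {u : ℝ} (hu : 0 ≤ u) (i : Fin m) :
    ∫ ω in noRareEventUpTo Pstart ζ π u ε, expIncrements Pstart κ ζ π n t s ε ω ∂Pstart ε i
      = (productUpTo (avgRare Pstart ζ π) (fun ε k =>
          laplaceMatrix (Pstart ε) (η ε) (κ ε) (ζ ε)
            (decide (k < ⌊u * (avgRare Pstart ζ π ε)⁻¹⌋₊))
            (blockStep (fun r => ⌊t r * (avgRare Pstart ζ π ε)⁻¹⌋₊) n (fun r => s (r + 1)) k))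
          (max (t n) u) ε *ᵥ 1) i := by
  have hfloor {a : ℝ} (ha : a ≤ max (t n) u) :
      ⌊a * (avgRare Pstart ζ π ε)⁻¹⌋₊ ≤ ⌊max (t n) u * (avgRare Pstart ζ π ε)⁻¹⌋₊ := by
    gcongr
  simp only [noRareEventUpTo, forall_mul_le_iff_forall_lt_floor hx hu, expIncrements_eq]
  exact (hlaw.isMarkovRenewal hη hκ hζ).setIntegral_exp_eq hκ hζ hκ0 hη
    (monotoneOn_natFloor_mul_inv ht hx) (hfloor (le_max_left _ _)) (hfloor (le_max_right _ _)) hs i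

end Increments

section Rates

variable {l : Filter ℝ} [∀ ε i, IsProbabilityMeasure (Pstart ε i)]
  (hη : ∀ ε n, Measurable (η ε n)) (hκ : ∀ ε n, Measurable (κ ε n))
  (hζ : ∀ ε n, Measurable (ζ ε n)) (hκ0 : ∀ ε n ω, 0 ≤ κ ε n ω)

include hη hκ hζ hκ0

lemma tendsto_inv_mul_meanDefect_laplaceMatrix_false {x : ℝ → ℝ} {s a : ℝ} (hs : 0 ≤ s)
    (hD : Tendsto (fun ε => (x ε)⁻¹ * (1 - lapPhi Pstart κ π ε s)) l (𝓝 a)) :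
    Tendsto (fun ε => (x ε)⁻¹ *
      meanDefect (π ε) (laplaceMatrix (Pstart ε) (η ε) (κ ε) (ζ ε) false s)) l (𝓝 a) := by
  refine hD.congr fun ε => ?_
  rw [meanDefect_laplaceMatrix_false (hκ ε) (hζ ε) (hκ0 ε) (hη ε) _ hs, lapPhi]

lemma tendsto_inv_mul_meanDefect_laplaceMatrix_true_sub
    (hC : ∀ i : Fin m, ∀ δ > 0, Tendsto (fun ε =>
      (Pstart ε i {ω | δ < κ ε 1 ω ∧ ζ ε 1 ω = true}).toReal / rareP Pstart ζ ε i) l (𝓝 0))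
    (hx : Tendsto (avgRare Pstart ζ π) l (𝓝[>] 0)) (hπ : ∀ᶠ ε in l, 0 ≤ π ε) {s : ℝ}
    (hs : 0 ≤ s) :
    Tendsto (fun ε => (avgRare Pstart ζ π ε)⁻¹ *
      (meanDefect (π ε) (laplaceMatrix (Pstart ε) (η ε) (κ ε) (ζ ε) true s)
        - meanDefect (π ε) (laplaceMatrix (Pstart ε) (η ε) (κ ε) (ζ ε) false s))) l (𝓝 1) := by
  refine (tendsto_inv_avgRare_mul_sum_setIntegral_exp hκ hκ0 hC hs hx hπ).congr fun ε => ?_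
  rw [meanDefect_laplaceMatrix_true (hκ ε) (hζ ε) (hκ0 ε) (hη ε) _ hs, add_sub_cancel_left]

lemma IsUniformlyErgodic.tendsto_setIntegral_expIncrements
    (herg : IsUniformlyErgodic l
      (fun ε => Matrix.of fun i j => (Pstart ε i).real (η ε 1 ⁻¹' {j})) π)
    (hx : Tendsto (avgRare Pstart ζ π) l (𝓝[>] 0))
    (hC : ∀ i : Fin m, ∀ δ > 0, Tendsto (fun ε =>
      (Pstart ε i {ω | δ < κ ε 1 ω ∧ ζ ε 1 ω = true}).toReal / rareP Pstart ζ ε i) l (𝓝 0))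
    {A : ℝ → ℝ} (hD : ∀ s > 0, Tendsto
      (fun ε => (avgRare Pstart ζ π ε)⁻¹ * (1 - lapPhi Pstart κ π ε s)) l (𝓝 (A s)))
    {Q : ℝ → Fin m → Fin m → ℝ → Bool → ℝ}
    (hlaw : ∀ᶠ ε in l, HasCylinderLaw (Pstart ε) (η ε) (κ ε) (ζ ε) (Q ε)) {u : ℝ} (hu : 0 ≤ u)
    {n : ℕ} {t : ℕ → ℝ} (ht0 : t 0 = 0) (ht : MonotoneOn t (Iic n)) {s : ℕ → ℝ}
    (hs : ∀ r < n, 0 < s (r + 1)) (i : Fin m) :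
    Tendsto (fun ε => ∫ ω in noRareEventUpTo Pstart ζ π u ε,
        expIncrements Pstart κ ζ π n t s ε ω ∂Pstart ε i) l
      (𝓝 (Real.exp (-(∑ r ∈ Finset.range n, A (s (r + 1)) * (t (r + 1) - t r) + u)))) := by
  have hπ : ∀ᶠ ε in l, π ε ∈ stdSimplex ℝ (Fin m) := by
    obtain ⟨_, _, _, herg⟩ := herg
    exact herg.mono fun ε h => h.2.2.1
  have hD0 : Tendsto (fun ε => (avgRare Pstart ζ π ε)⁻¹ * (1 - lapPhi Pstart κ π ε 0)) l (𝓝 0) :=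
    tendsto_const_nhds.congr' (hπ.mono fun ε hπ => by simp [lapPhi, hπ.2])
  refine (herg.tendsto_productUpTo_blockStep hx
    (M := fun ε => laplaceMatrix (Pstart ε) (η ε) (κ ε) (ζ ε))
    (Eventually.of_forall fun ε d s hs => laplaceMatrix_mem_Icc (hκ ε) (hζ ε) (hκ0 ε) d hs)
    (fun r hr => (hs r hr).le)
    (fun r hr => tendsto_inv_mul_meanDefect_laplaceMatrix_false hη hκ hζ hκ0 (hs r hr).le
      (hD _ (hs r hr)))
    (tendsto_inv_mul_meanDefect_laplaceMatrix_false hη hκ hζ hκ0 le_rfl hD0)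
    (fun s hs => tendsto_inv_mul_meanDefect_laplaceMatrix_true_sub hη hκ hζ hκ0 hC hx
      (hπ.mono fun ε h => h.1) hs) ht0 ht hu i).congr' ?_
  filter_upwards [hx.eventually self_mem_nhdsWithin, hlaw] with ε hx hlaw
  exact (setIntegral_expIncrements_eq hx ht (fun r hr => (hs r hr).le) (hκ ε) (hη ε) (hζ ε)
    (hκ0 ε) hlaw hu i).symm

end Rates

end FirstRareEvent

theorem stmt16_general {m : ℕ} {ε₀ : ℝ} (hε₀ : 0 < ε₀) {Ω : Type} [MeasurableSpace Ω]
    {η : ℝ → ℕ → Ω → Fin m} {κ : ℝ → ℕ → Ω → ℝ} {ζ : ℝ → ℕ → Ω → Bool}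
    {Pstart : ℝ → Fin m → Measure Ω} [∀ ε i, IsProbabilityMeasure (Pstart ε i)]
    (hmeas : ∀ ε n, Measurable (η ε n) ∧ Measurable (κ ε n) ∧ Measurable (ζ ε n))
    (hκ0 : ∀ ε n ω, 0 ≤ κ ε n ω) {Q : ℝ → Fin m → Fin m → ℝ → Bool → ℝ}
    (hlaw : ∀ ε ∈ Ioc 0 ε₀, HasCylinderLaw (Pstart ε) (η ε) (κ ε) (ζ ε) (Q ε))
    {p : ℝ → Fin m → Fin m → ℝ}
    (hp : ∀ ε ∈ Ioc 0 ε₀, ∀ i j, p ε i j = (Pstart ε i {ω | η ε 1 ω = j}).toReal)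
    (hB : CondB p) {π : ℝ → Fin m → ℝ}
    (hπ : ∀ᶠ ε in 𝓝[>] (0 : ℝ), IsStationaryDist (p ε) (π ε))
    (hA1 : ∀ ε ∈ Ioc 0 ε₀, ∃ i, 0 < rareP Pstart ζ ε i)
    (hA2 : ∀ i, Tendsto (fun ε => rareP Pstart ζ ε i) (𝓝[>] 0) (𝓝 0))
    (hC : ∀ i : Fin m, ∀ δ > 0, Tendsto
      (fun ε => (Pstart ε i {ω | δ < κ ε 1 ω ∧ ζ ε 1 ω = true}).toReal / rareP Pstart ζ ε i)
      (𝓝[>] 0) (𝓝 0))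
    {A : ℝ → ℝ} (hD : ∀ s > 0, Tendsto
      (fun ε => (avgRare Pstart ζ π ε)⁻¹ * (1 - lapPhi Pstart κ π ε s)) (𝓝[>] 0) (𝓝 (A s)))
    {q : ℝ → Fin m → ℝ} {Pq : ℝ → Measure Ω}
    (hq : ∀ ε ∈ Ioc 0 ε₀, (∀ i, 0 ≤ q ε i) ∧ ∑ i, q ε i = 1)
    (hmix : ∀ ε ∈ Ioc 0 ε₀, Pq ε = ∑ i, ENNReal.ofReal (q ε i) • Pstart ε i)
    {u : ℝ} (hu : 0 ≤ u) {n : ℕ} {t : ℕ → ℝ} (ht0 : t 0 = 0) (ht : ∀ r < n, t r ≤ t (r + 1))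
    {s : ℕ → ℝ} (hs : ∀ r, 1 ≤ r → r ≤ n → 0 < s r) :
    Tendsto (fun ε => ∫ ω in noRareEventUpTo Pstart ζ π u ε,
        expIncrements Pstart κ ζ π n t s ε ω ∂Pq ε) (𝓝[>] 0)
      (𝓝 (Real.exp (-u) * Real.exp (-(∑ r ∈ Finset.Icc 1 n, A (s r) * (t r - t (r - 1)))))) := by
  have hε : ∀ᶠ ε in 𝓝[>] (0 : ℝ), ε ∈ Ioc 0 ε₀ := Ioc_mem_nhdsGT hε₀
  have hη (ε : ℝ) (n : ℕ) : Measurable (η ε n) := (hmeas ε n).1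
  have hκ (ε : ℝ) (n : ℕ) : Measurable (κ ε n) := (hmeas ε n).2.1
  have hζ (ε : ℝ) (n : ℕ) : Measurable (ζ ε n) := (hmeas ε n).2.2
  have hs' (r : ℕ) (hr : r < n) : 0 < s (r + 1) := hs (r + 1) (Nat.le_add_left 1 r) hr
  have ht' : MonotoneOn t (Iic n) :=
    monotoneOn_of_le_add_one ordConnected_Iic fun r _ _ hr => ht r hr
  have hP : (fun ε => Matrix.of (p ε)) =ᶠ[𝓝[>] 0]
      fun ε => Matrix.of fun i j => (Pstart ε i).real (η ε 1 ⁻¹' {j}) :=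
    hε.mono fun ε hε => congrArg Matrix.of (funext₂ (hp ε hε))
  have hstoch : ∀ᶠ ε in 𝓝[>] (0 : ℝ), Matrix.of (p ε) ∈ Matrix.rowStochastic ℝ (Fin m) := by
    filter_upwards [hP] with ε hP
    rw [hP]
    exact of_measureReal_preimage_singleton_mem_rowStochastic (hη ε 1)
  have herg := (hB.isUniformlyErgodic hstoch hπ).congr hP
  have hx := herg.tendsto_avgRare (hε.mono hA1) hA2
  have hstart := herg.tendsto_setIntegral_expIncrements hη hκ hζ hκ0 hx hC hD (hε.mono hlaw) hu
    ht0 ht' hs'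
  have hlimit := tendsto_dotProduct_of_tendsto_const (hε.mono fun ε hε => (hq ε hε).1)
    (tendsto_const_nhds.congr' (hε.mono fun ε hε => (hq ε hε).2.symm)) hstart
  rw [← Real.exp_add, sum_Icc_eq_sum_range_succ, ← neg_add_rev]
  rw [one_mul] at hlimit
  refine hlimit.congr' ?_
  filter_upwards [hε, hx.eventually self_mem_nhdsWithin] with ε hε hx
  rw [hmix ε hε, setIntegral_sum_ofReal_smul (fun i => (integrable_expIncrements hx (hκ0 ε) ht'
    (fun r hr => (hs' r hr).le) (hκ ε) _).integrableOn) (hq ε hε).1]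

/-- Lemma 9: under conditions A, B, C and D₁, the pair
`(ν*_ε, κ_ε(·))` converges jointly in distribution to `(ν₀, θ₀(·))`, where `ν₀` is
exponential with parameter 1, `θ₀(·)` is a nonnegative Lévy process with
`E e^{−sθ₀(t)} = e^{−tA(s)}`, and `ν₀` and `θ₀(·)` are independent.  Here the event
`{ν*_ε > u}` is the event that no rare event occurs among the steps `n ≥ 1` with
`p_ε n ≤ u`. -/
theorem stmt16 {m : ℕ} (hm : 0 < m) (ε₀ : ℝ) (hε₀ : 0 < ε₀)
    {Ω : Type} [MeasurableSpace Ω]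
    (η : ℝ → ℕ → Ω → Fin m) (κ : ℝ → ℕ → Ω → ℝ) (ζ : ℝ → ℕ → Ω → Bool)
    (Pstart : ℝ → Fin m → Measure Ω)
    (hprob : ∀ ε i, IsProbabilityMeasure (Pstart ε i))
    (hmeas : ∀ ε n, Measurable (η ε n) ∧ Measurable (κ ε n) ∧ Measurable (ζ ε n))
    (hκnn : ∀ ε n ω, 0 ≤ κ ε n ω)
    (Q : ℝ → Fin m → Fin m → ℝ → Bool → ℝ)
    (hMRP : ∀ ε ∈ Ioc (0:ℝ) ε₀, ∀ n : ℕ, ∀ I : ℕ → Fin m, ∀ T : ℕ → ℝ, ∀ Z : ℕ → Bool,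
      Pstart ε (I 0)
          {ω | ∀ k ≤ n, (η ε k ω = I k ∧ (1 ≤ k → (κ ε k ω ≤ T k ∧ ζ ε k ω = Z k)))}
        = ENNReal.ofReal (∏ k ∈ Finset.Icc 1 n, Q ε (I (k - 1)) (I k) (T k) (Z k)))
    (p : ℝ → Fin m → Fin m → ℝ)
    (hp : ∀ ε ∈ Ioc (0:ℝ) ε₀, ∀ i j, p ε i j = (Pstart ε i {ω | η ε 1 ω = j}).toReal)
    (hB : CondB p)
    (π : ℝ → Fin m → ℝ)
    (hπ : ∀ᶠ ε in 𝓝[>] (0:ℝ), IsStationaryDist (fun i j => p ε i j) (π ε))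
    -- condition A
    (hA1 : ∀ ε ∈ Ioc (0:ℝ) ε₀, ∃ i, 0 < rareP Pstart ζ ε i)
    (hA2 : ∀ i, Tendsto (fun ε => rareP Pstart ζ ε i) (𝓝[>] (0:ℝ)) (𝓝 0))
    -- condition C
    (hC : ∀ i : Fin m, ∀ δ > 0, Tendsto
      (fun ε => (Pstart ε i {ω | δ < κ ε 1 ω ∧ ζ ε 1 ω = true}).toReal / rareP Pstart ζ ε i)
      (𝓝[>] (0:ℝ)) (𝓝 0))
    -- condition D₁, with v_ε = p_ε⁻¹
    (A : ℝ → ℝ)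
    (hD : ∀ s > 0, Tendsto
      (fun ε => (avgRare Pstart ζ π ε)⁻¹ * (1 - lapPhi Pstart κ π ε s))
      (𝓝[>] (0:ℝ)) (𝓝 (A s)))
    (hApos : ∀ s > 0, 0 < A s)
    (hA0 : Tendsto A (𝓝[>] (0:ℝ)) (𝓝 0))
    -- arbitrary family of initial distributions
    (q : ℝ → Fin m → ℝ) (Pq : ℝ → Measure Ω)
    (hq : ∀ ε ∈ Ioc (0:ℝ) ε₀, (∀ i, 0 ≤ q ε i) ∧ ∑ i, q ε i = 1)
    (hmix : ∀ ε ∈ Ioc (0:ℝ) ε₀, Pq ε = ∑ i, ENNReal.ofReal (q ε i) • Pstart ε i) :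
    ∀ u : ℝ, 0 ≤ u → ∀ n : ℕ, ∀ t : ℕ → ℝ, t 0 = 0 → (∀ r < n, t r ≤ t (r + 1)) →
    ∀ s : ℕ → ℝ, (∀ r, 1 ≤ r → r ≤ n → 0 < s r) →
    Tendsto
      (fun ε => ∫ ω in {ω | ∀ n' : ℕ, 1 ≤ n' →
          avgRare Pstart ζ π ε * (n' : ℝ) ≤ u → ζ ε n' ω = false},
        Real.exp (-(∑ r ∈ Finset.Icc 1 n,
          s r * (stepSumRE Pstart κ ζ π ε (t r) ω - stepSumRE Pstart κ ζ π ε (t (r - 1)) ω)))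
        ∂(Pq ε))
      (𝓝[>] (0:ℝ))
      (𝓝 (Real.exp (-u) * Real.exp (-(∑ r ∈ Finset.Icc 1 n, A (s r) * (t r - t (r - 1)))))) := by
  intro u hu n t ht0 ht s hs
  exact stmt16_general hε₀ hmeas hκnn hMRP hp hB hπ hA1 hA2 hC hD hq hmix hu ht0 ht hs
end
end

section
/- Suppose condition B holds with ring chain i₀, i₁, …, i_N = i₀. Then there exist p ∈ (0,1) and ε_p ∈ (0, ε₀] such that for all ε ∈ (0, ε_p], all states i, j ∈ X and all integers k ≥ 1: P_i(α_{ε,j} > kN) ≤ (1 − p)^k, where α_{ε,j} = min{n ≥ 1 : η_{ε,n} = j} is the first hitting time of state j. Consequently, there exists K_p < ∞ such that max_{i,j∈X} E_i α_{ε,j}² ≤ K_p for all ε ∈ (0, ε_p]. -/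
open MeasureTheory Filter Set
open scoped Topology ENNReal

noncomputable section

/-!
Some `δ ∈ (0, 1)` bounds every transition probability along the ring from below, for all small
`ε`. Following the ring, the chain gets from any state to any other in some `n ≤ N`
steps with probability at least `δ ^ n ≥ δ ^ N`, so it avoids `j` for `N` steps with probability
at most `1 - δ ^ N`, whatever the starting point. Restarting every `N` steps makes the tail
geometric, and a geometric tail has a finite second moment.
-/

open scoped Matrix

section NonnegMatrix

lemma updateCol_zero_nonneg {X R : Type*} [DecidableEq X] [Zero R] [Preorder R]
    {M : Matrix X X R} (hM : ∀ i l, 0 ≤ M i l) (j i l : X) : 0 ≤ M.updateCol j 0 i l := by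
  rw [Matrix.updateCol_apply]
  exact ite_nonneg le_rfl (hM i l)

variable {X R : Type*} [Fintype X] [Semiring R] [PartialOrder R] [IsOrderedRing R]
  {M : Matrix X X R}

lemma mulVec_mono_of_nonneg (hM : ∀ i l, 0 ≤ M i l) : Monotone (M *ᵥ ·) := fun _ _ hvw i =>
  dotProduct_le_dotProduct_of_nonneg_left hvw (hM i)

lemma matrix_pow_apply_nonneg [DecidableEq X] (hM : ∀ i l, 0 ≤ M i l) (n : ℕ) (i l : X) :
    0 ≤ (M ^ n) i l := by
  induction n generalizing l with
  | zero =>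
    rw [pow_zero, Matrix.one_apply]
    exact ite_nonneg zero_le_one le_rfl
  | succ n ih =>
    rw [pow_succ, Matrix.mul_apply]
    exact Finset.sum_nonneg fun k _ => mul_nonneg (ih k) (hM k l)

end NonnegMatrix

lemma mulVec_apply_le_one_sub_mul {X : Type*} [Fintype X] [DecidableEq X] {P : Matrix X X ℝ}
    (hP : P ∈ Matrix.rowStochastic ℝ X) {f : X → ℝ} (hf : f ≤ 1) {δ q : ℝ} (hq : 0 ≤ q)
    {i l : X} (hδ : δ ≤ P i l) (hfl : f l ≤ 1 - q) :
    (P *ᵥ f) i ≤ 1 - δ * q := by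
  have hdefect : 1 - (P *ᵥ f) i = ∑ k, P i k * (1 - f k) := by
    simp only [mul_sub, mul_one, Finset.sum_sub_distrib,
      Matrix.sum_row_of_mem_rowStochastic hP, Matrix.mulVec, dotProduct]
  have hterm : P i l * (1 - f l) ≤ ∑ k, P i k * (1 - f k) :=
    Finset.single_le_sum (f := fun k => P i k * (1 - f k))
      (fun k _ => mul_nonneg (hP.1 i k) (sub_nonneg.2 (hf k))) (Finset.mem_univ l)
  have hprod : δ * q ≤ P i l * (1 - f l) :=
    mul_le_mul hδ (by linarith) hq (hP.1 i l)
  linarith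

section AvoidProb

variable {X : Type*} [Fintype X] [DecidableEq X] {P : Matrix X X ℝ} {j : X}

/-- The taboo probability that a chain with transition matrix `P`, started at `i`, is at none of
the times `1, …, n` in the state `j`, as a function of `i`. Zeroing column `j` forbids the steps
into `j`, while starting from `j` remains allowed. -/
def avoidProb (P : Matrix X X ℝ) (j : X) (n : ℕ) : X → ℝ :=
  P.updateCol j 0 ^ n *ᵥ 1

lemma avoidProb_zero : avoidProb P j 0 = 1 := by
  rw [avoidProb, pow_zero, Matrix.one_mulVec]

lemma avoidProb_add (n k : ℕ) :
    avoidProb P j (n + k) = P.updateCol j 0 ^ n *ᵥ avoidProb P j k := by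
  rw [avoidProb, avoidProb, Matrix.mulVec_mulVec, pow_add]

lemma avoidProb_succ (n : ℕ) :
    avoidProb P j (n + 1) = P *ᵥ Function.update (avoidProb P j n) j 0 := by
  ext i
  rw [add_comm, avoidProb_add, pow_one]
  refine Finset.sum_congr rfl fun l _ => ?_
  by_cases h : l = j <;> simp [h]

lemma avoidProb_succ_apply (n : ℕ) (i : X) :
    avoidProb P j (n + 1) i = ∑ l ∈ Finset.univ.erase j, P i l * avoidProb P j n l := by
  rw [avoidProb_succ, Matrix.mulVec, dotProduct, ← Finset.sum_erase _ (a := j) (by simp)]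
  refine Finset.sum_congr rfl fun l hl => ?_
  rw [Function.update_of_ne (Finset.ne_of_mem_erase hl)]

lemma avoidProb_nonneg (hP : ∀ i l, 0 ≤ P i l) (n : ℕ) : 0 ≤ avoidProb P j n := fun i =>
  dotProduct_nonneg_of_nonneg (matrix_pow_apply_nonneg (updateCol_zero_nonneg hP j) n i) zero_le_one

lemma avoidProb_antitone (hP : P ∈ Matrix.rowStochastic ℝ X) : Antitone (avoidProb P j) := by
  have hone : avoidProb P j 1 ≤ 1 := by
    calc avoidProb P j 1 = P *ᵥ Function.update 1 j 0 := by rw [avoidProb_succ, avoidProb_zero]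
      _ ≤ P *ᵥ 1 := mulVec_mono_of_nonneg hP.1 (update_le_self_iff.2 zero_le_one)
      _ = 1 := hP.2
  refine antitone_nat_of_succ_le fun n => ?_
  rw [avoidProb_add]
  exact mulVec_mono_of_nonneg (matrix_pow_apply_nonneg (updateCol_zero_nonneg hP.1 j) n) hone

lemma avoidProb_le_one (hP : P ∈ Matrix.rowStochastic ℝ X) (n : ℕ) : avoidProb P j n ≤ 1 :=
  avoidProb_zero (P := P) (j := j) ▸ avoidProb_antitone hP n.zero_le

lemma avoidProb_add_le (hP : ∀ i l, 0 ≤ P i l) {N : ℕ} {r : ℝ}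
    (hr : ∀ i, avoidProb P j N i ≤ r) (n : ℕ) :
    avoidProb P j (n + N) ≤ r • avoidProb P j n := by
  have hr' : avoidProb P j N ≤ r • 1 := fun i => by simpa using hr i
  rw [avoidProb_add, avoidProb.eq_def P j n, ← Matrix.mulVec_smul]
  exact mulVec_mono_of_nonneg (matrix_pow_apply_nonneg (updateCol_zero_nonneg hP j) n) hr'

lemma avoidProb_mul_le_pow (hP : ∀ i l, 0 ≤ P i l) {N : ℕ} {r : ℝ} (hr0 : 0 ≤ r)
    (hr : ∀ i, avoidProb P j N i ≤ r) (k : ℕ) (i : X) :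
    avoidProb P j (k * N) i ≤ r ^ k := by
  induction k with
  | zero => simp [avoidProb_zero]
  | succ k ih =>
    rw [Nat.succ_mul, pow_succ']
    exact (avoidProb_add_le hP hr _ i).trans (mul_le_mul_of_nonneg_left ih hr0)

lemma avoidProb_le_pow_div (hP : P ∈ Matrix.rowStochastic ℝ X) {N : ℕ} {r : ℝ} (hr0 : 0 ≤ r)
    (hr : ∀ i, avoidProb P j N i ≤ r) (n : ℕ) (i : X) :
    avoidProb P j n i ≤ r ^ (n / N) :=
  (avoidProb_antitone hP (Nat.div_mul_le_self n N) i).trans (avoidProb_mul_le_pow hP.1 hr0 hr _ i)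

lemma avoidProb_succ_le_one_sub_mul (hP : P ∈ Matrix.rowStochastic ℝ X) {δ q : ℝ} (hq : 0 ≤ q)
    {n : ℕ} {i l : X} (hδ : δ ≤ P i l)
    (hl : Function.update (avoidProb P j n) j 0 l ≤ 1 - q) :
    avoidProb P j (n + 1) i ≤ 1 - δ * q := by
  rw [avoidProb_succ]
  exact mulVec_apply_le_one_sub_mul hP
    (update_le_iff.2 ⟨zero_le_one, fun k _ => avoidProb_le_one hP n k⟩) hq hδ hl

/- Setting the value at `j` to `0` lets the induction start from the empty path, `d 0 = j`. -/
lemma update_avoidProb_le_one_sub_pow (hP : P ∈ Matrix.rowStochastic ℝ X) {δ : ℝ} (hδ : 0 ≤ δ)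
    {n : ℕ} {d : ℕ → X} (hd : ∀ t < n, δ ≤ P (d t) (d (t + 1))) (hdn : d n = j) :
    Function.update (avoidProb P j n) j 0 (d 0) ≤ 1 - δ ^ n := by
  induction n generalizing d with
  | zero => simp [hdn]
  | succ n ih =>
    have htail := ih (d := fun t => d (t + 1)) (fun t ht => hd (t + 1) (by omega)) hdn
    calc Function.update (avoidProb P j (n + 1)) j 0 (d 0)
        ≤ avoidProb P j (n + 1) (d 0) :=
          update_le_self_iff.2 (avoidProb_nonneg hP.1 (n + 1) j) (d 0)
      _ ≤ 1 - δ * δ ^ n :=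
          avoidProb_succ_le_one_sub_mul hP (pow_nonneg hδ n) (hd 0 n.succ_pos) htail
      _ = 1 - δ ^ (n + 1) := by rw [pow_succ']

lemma avoidProb_succ_le_one_sub_pow (hP : P ∈ Matrix.rowStochastic ℝ X) {δ : ℝ} (hδ : 0 ≤ δ)
    {n : ℕ} {d : ℕ → X} (hd : ∀ t ≤ n, δ ≤ P (d t) (d (t + 1))) (hdn : d (n + 1) = j) :
    avoidProb P j (n + 1) (d 0) ≤ 1 - δ ^ (n + 1) := by
  rw [pow_succ']
  exact avoidProb_succ_le_one_sub_mul hP (pow_nonneg hδ n) (hd 0 n.zero_le)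
    (update_avoidProb_le_one_sub_pow hP hδ (d := fun t => d (t + 1))
      (fun t ht => hd (t + 1) ht) hdn)

end AvoidProb

section RingChain

variable {X : Type*} {r : X → X → Prop} {N : ℕ} {c : ℕ → X}

lemma rel_mod_succ_mod_of_ringChain (hN : 0 < N) (hring : c N = c 0)
    (hc : ∀ k < N, r (c k) (c (k + 1))) (t : ℕ) : r (c (t % N)) (c ((t + 1) % N)) := by
  have hlt := Nat.mod_lt t hN
  have hnext : c ((t + 1) % N) = c (t % N + 1) := by
    rw [← Nat.mod_add_mod]
    rcases (Nat.succ_le_of_lt hlt).lt_or_eq with hinside | hwrap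
    · rw [Nat.mod_eq_of_lt hinside]
    · rw [← Nat.succ_eq_add_one, hwrap, Nat.mod_self, hring]
  exact hnext ▸ hc _ hlt

lemma exists_lt_eq_of_ringChain (hN : 0 < N) (hring : c N = c 0) (hall : ∀ i, ∃ k ≤ N, c k = i)
    (i : X) : ∃ k < N, c k = i := by
  obtain ⟨k, hk, rfl⟩ := hall i
  rcases hk.lt_or_eq with hlt | rfl
  · exact ⟨k, hlt, rfl⟩
  · exact ⟨0, hN, hring.symm⟩

lemma exists_path_of_ringChain (hN : 0 < N) (hring : c N = c 0) (hall : ∀ i, ∃ k ≤ N, c k = i)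
    (hc : ∀ k < N, r (c k) (c (k + 1))) (i j : X) :
    ∃ n < N, ∃ d : ℕ → X, d 0 = i ∧ d (n + 1) = j ∧ ∀ t, r (d t) (d (t + 1)) := by
  obtain ⟨a, ha, rfl⟩ := exists_lt_eq_of_ringChain hN hring hall i
  obtain ⟨b, hb, rfl⟩ := exists_lt_eq_of_ringChain hN hring hall j
  obtain ⟨n, hn, hnb⟩ : ∃ n < N, (a + (n + 1)) % N = b := by
    rcases lt_or_ge a b with hab | hba
    · exact ⟨b - a - 1, by omega, by
        rw [show a + (b - a - 1 + 1) = b by omega, Nat.mod_eq_of_lt hb]⟩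
    · exact ⟨N + b - a - 1, by omega, by
        rw [show a + (N + b - a - 1 + 1) = N + b by omega, Nat.add_mod_left,
          Nat.mod_eq_of_lt hb]⟩
  refine ⟨n, hn, fun t => c ((a + t) % N), ?_, ?_, fun t => ?_⟩
  · simp only [add_zero, Nat.mod_eq_of_lt ha]
  · simp only [hnb]
  · exact rel_mod_succ_mod_of_ringChain hN hring hc (a + t)

end RingChain

lemma avoidProb_le_one_sub_pow_of_ringChain {X : Type*} [Fintype X] [DecidableEq X]
    {P : Matrix X X ℝ} (hP : P ∈ Matrix.rowStochastic ℝ X) {δ : ℝ} (hδ : 0 ≤ δ) {N : ℕ}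
    (hN : 0 < N) {c : ℕ → X} (hring : c N = c 0) (hall : ∀ i, ∃ k ≤ N, c k = i)
    (hc : ∀ k < N, δ ≤ P (c k) (c (k + 1))) (i j : X) :
    avoidProb P j N i ≤ 1 - δ ^ N := by
  obtain ⟨n, hn, d, rfl, hdn, hd⟩ :=
    exists_path_of_ringChain (r := fun a b => δ ≤ P a b) hN hring hall hc i j
  have hδ1 : δ ≤ 1 := (hc 0 hN).trans (Matrix.le_one_of_mem_rowStochastic hP)
  calc avoidProb P j N (d 0) ≤ avoidProb P j (n + 1) (d 0) := avoidProb_antitone hP hn (d 0)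
    _ ≤ 1 - δ ^ (n + 1) := avoidProb_succ_le_one_sub_pow hP hδ (fun t _ => hd t) hdn
    _ ≤ 1 - δ ^ N := sub_le_sub_left (pow_le_pow_of_le_one hδ hδ1 hn) 1

section PathWeight

variable {X : Type*} {P : Matrix X X ℝ}

/-- The probability that a chain with transition matrix `P`, started at `I 0`, passes through
`I 1, …, I n` in its first `n` steps. -/
def pathWeight (P : Matrix X X ℝ) (I : ℕ → X) (n : ℕ) : ℝ :=
  ∏ k ∈ Finset.range n, P (I k) (I (k + 1))

lemma pathWeight_eq_prod_Icc (I : ℕ → X) (n : ℕ) :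
    pathWeight P I n = ∏ k ∈ Finset.Icc 1 n, P (I (k - 1)) (I k) := by
  rw [← Finset.Ico_add_one_right_eq_Icc, Finset.prod_Ico_eq_prod_range]
  simp only [pathWeight, Nat.add_sub_cancel, add_comm 1]

lemma pathWeight_nonneg (hP : ∀ i l, 0 ≤ P i l) (I : ℕ → X) (n : ℕ) : 0 ≤ pathWeight P I n :=
  Finset.prod_nonneg fun _ _ => hP _ _

lemma pathWeight_update_succ (I : ℕ → X) (n : ℕ) (l : X) :
    pathWeight P (Function.update I (n + 1) l) (n + 1) = pathWeight P I n * P (I n) l := by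
  rw [pathWeight, Finset.prod_range_succ, Function.update_self,
    Function.update_of_ne n.succ_ne_self.symm]
  refine congrArg (· * _) (Finset.prod_congr rfl fun k hk => ?_)
  have hkn := Finset.mem_range.1 hk
  rw [Function.update_of_ne (by omega), Function.update_of_ne (by omega)]

end PathWeight

section AvoidAfterPath

variable {X Ω : Type*} [Fintype X] [DecidableEq X] {η : ℕ → Ω → X}

/-- The event that `η` follows the path `I` up to time `s` and then stays away from `j` for the
next `n` steps; conditioning on the path turns the avoidance bound into an induction on `n`. -/
def avoidAfterPath (η : ℕ → Ω → X) (j : X) (I : ℕ → X) (s n : ℕ) : Set Ω :=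
  {ω | (∀ k ≤ s, η k ω = I k) ∧ ∀ k, s < k → k ≤ s + n → η k ω ≠ j}

lemma avoidAfterPath_succ_subset (j : X) (I : ℕ → X) (s n : ℕ) :
    avoidAfterPath η j I s (n + 1) ⊆
      ⋃ l ∈ Finset.univ.erase j, avoidAfterPath η j (Function.update I (s + 1) l) (s + 1) n := by
  rintro ω ⟨hpath, havoid⟩
  have hnext : η (s + 1) ω ∈ Finset.univ.erase j :=
    Finset.mem_erase.2 ⟨havoid (s + 1) (by omega) (by omega), Finset.mem_univ _⟩
  refine mem_biUnion hnext ⟨fun k hk => ?_, fun k hk hkn => havoid k (by omega) (by omega)⟩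
  rcases hk.lt_or_eq with hlt | rfl
  · rw [Function.update_of_ne hlt.ne, hpath k (by omega)]
  · rw [Function.update_self]

end AvoidAfterPath

section MarkovFamily

variable {X Ω : Type*} [Fintype X] [DecidableEq X] [MeasurableSpace Ω] {P : Matrix X X ℝ}
  {η : ℕ → Ω → X} {μ : X → Measure Ω}

/-- Under the laws `μ i`, `η` is a homogeneous Markov chain with transition matrix `P` started at
`i`, expressed through its finite-dimensional distributions. -/
structure IsMarkovFamily (P : Matrix X X ℝ) (η : ℕ → Ω → X) (μ : X → Measure Ω) : Prop where
  stochastic : P ∈ Matrix.rowStochastic ℝ X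
  ae_start : ∀ i, ∀ᵐ ω ∂μ i, η 0 ω = i
  cylinder : ∀ (n : ℕ) (I : ℕ → X),
    μ (I 0) {ω | ∀ k ≤ n, η k ω = I k} = ENNReal.ofReal (pathWeight P I n)

namespace IsMarkovFamily

lemma of_cylinder [MeasurableSpace X] [MeasurableSingletonClass X]
    [∀ i, IsProbabilityMeasure (μ i)] (hη : Measurable (η 0))
    (hP : P ∈ Matrix.rowStochastic ℝ X)
    (hcyl : ∀ (n : ℕ) (I : ℕ → X), μ (I 0) {ω | ∀ k ≤ n, η k ω = I k}
      = ENNReal.ofReal (∏ k ∈ Finset.Icc 1 n, P (I (k - 1)) (I k))) :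
    IsMarkovFamily P η μ where
  stochastic := hP
  ae_start i := by
    have hstart : μ i (η 0 ⁻¹' {i}) = 1 := by
      simpa [Set.preimage] using hcyl 0 fun _ => i
    exact (mem_ae_iff_prob_eq_one (hη (measurableSet_singleton i))).2 hstart
  cylinder n I := by rw [hcyl, pathWeight_eq_prod_Icc]

lemma measure_avoidAfterPath_le (h : IsMarkovFamily P η μ) (j : X) (I : ℕ → X) (s n : ℕ) :
    μ (I 0) (avoidAfterPath η j I s n)
      ≤ ENNReal.ofReal (pathWeight P I s * avoidProb P j n (I s)) := by
  induction n generalizing s I with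
  | zero =>
    rw [avoidProb_zero, Pi.one_apply, mul_one, ← h.cylinder]
    exact measure_mono fun ω hω => hω.1
  | succ n ih =>
    have hnext (l : X) :
        μ (I 0) (avoidAfterPath η j (Function.update I (s + 1) l) (s + 1) n)
          ≤ ENNReal.ofReal (pathWeight P I s * P (I s) l * avoidProb P j n l) := by
      simpa only [pathWeight_update_succ, Function.update_self,
        Function.update_of_ne s.succ_ne_zero.symm] using ih (Function.update I (s + 1) l) (s + 1)
    have hnonneg (l : X) : 0 ≤ pathWeight P I s * P (I s) l * avoidProb P j n l :=
      mul_nonneg (mul_nonneg (pathWeight_nonneg h.stochastic.1 I s) (h.stochastic.1 _ l))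
        (avoidProb_nonneg h.stochastic.1 n l)
    calc μ (I 0) (avoidAfterPath η j I s (n + 1))
        ≤ ∑ l ∈ Finset.univ.erase j,
            μ (I 0) (avoidAfterPath η j (Function.update I (s + 1) l) (s + 1) n) :=
          (measure_mono (avoidAfterPath_succ_subset j I s n)).trans
            (measure_biUnion_finset_le _ _)
      _ ≤ ∑ l ∈ Finset.univ.erase j,
            ENNReal.ofReal (pathWeight P I s * P (I s) l * avoidProb P j n l) :=
          Finset.sum_le_sum fun l _ => hnext l
      _ = ENNReal.ofReal (pathWeight P I s * avoidProb P j (n + 1) (I s)) := by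
          rw [← ENNReal.ofReal_sum_of_nonneg fun l _ => hnonneg l, avoidProb_succ_apply,
            Finset.mul_sum]
          simp only [mul_assoc]

lemma measure_avoid_le_avoidProb (h : IsMarkovFamily P η μ) (i j : X) (n : ℕ) :
    μ i {ω | ∀ k, 1 ≤ k → k ≤ n → η k ω ≠ j} ≤ ENNReal.ofReal (avoidProb P j n i) := by
  have hstart : {ω | ∀ k, 1 ≤ k → k ≤ n → η k ω ≠ j} ≤ᵐ[μ i]
      avoidAfterPath η j (fun _ => i) 0 n := by
    filter_upwards [h.ae_start i] with ω hω havoid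
    exact ⟨fun k hk => Nat.le_zero.1 hk ▸ hω,
      fun k hk hkn => havoid k hk (hkn.trans_eq (zero_add n))⟩
  refine (measure_mono_ae hstart).trans ?_
  simpa [pathWeight] using h.measure_avoidAfterPath_le j (fun _ => i) 0 n

lemma measure_avoid_le_of_ringChain (h : IsMarkovFamily P η μ) {δ : ℝ} (hδ : 0 ≤ δ) {N : ℕ}
    (hN : 0 < N) {c : ℕ → X} (hring : c N = c 0) (hall : ∀ i, ∃ k ≤ N, c k = i)
    (hc : ∀ k < N, δ ≤ P (c k) (c (k + 1))) (i j : X) (n : ℕ) :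
    μ i {ω | ∀ k, 1 ≤ k → k ≤ n → η k ω ≠ j} ≤ ENNReal.ofReal ((1 - δ ^ N) ^ (n / N)) := by
  have hP := h.stochastic
  have hδ1 : δ ≤ 1 := (hc 0 hN).trans (Matrix.le_one_of_mem_rowStochastic hP)
  have hcycle (i : X) : avoidProb P j N i ≤ 1 - δ ^ N :=
    avoidProb_le_one_sub_pow_of_ringChain hP hδ hN hring hall hc i j
  exact (h.measure_avoid_le_avoidProb i j n).trans (ENNReal.ofReal_le_ofReal
    (avoidProb_le_pow_div hP (sub_nonneg.2 (pow_le_one₀ hδ hδ1)) hcycle n i))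

end IsMarkovFamily

end MarkovFamily

lemma eventually_nhdsGT_eventually_le_of_lt_liminf {α κ R : Type*}
    [ConditionallyCompleteLinearOrder R] [TopologicalSpace R] [OrderTopology R]
    {l : Filter α} {a : R} (s : Finset κ) {f : κ → α → R}
    (hbdd : ∀ k ∈ s, l.IsBoundedUnder (· ≥ ·) (f k)) (hf : ∀ k ∈ s, a < liminf (f k) l) :
    ∀ᶠ δ in 𝓝[>] a, ∀ᶠ x in l, ∀ k ∈ s, δ ≤ f k x := by
  simp only [eventually_all_finset]
  intro k hk
  filter_upwards [Ioo_mem_nhdsGT (hf k hk)] with δ hδ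
  exact (eventually_lt_of_lt_liminf hδ.2 (hbdd k hk)).mono fun _ => le_of_lt

lemma exists_mem_Ioc_forall_of_eventually_nhdsGT {R : Type*} [LinearOrder R] [TopologicalSpace R]
    [OrderTopology R] [DenselyOrdered R] {a b : R} (hab : a < b) {q : R → Prop}
    (hq : ∀ᶠ x in 𝓝[>] a, q x) : ∃ u ∈ Ioc a b, ∀ x ∈ Ioc a u, q x := by
  obtain ⟨u, hu, hsub⟩ := (mem_nhdsGT_iff_exists_mem_Ioc_Ioo_subset hab).1 hq
  obtain ⟨v, hav, hvu⟩ := exists_between hu.1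
  exact ⟨v, ⟨hav, hvu.le.trans hu.2⟩, fun x hx => hsub ⟨hx.1, hx.2.trans_lt hvu⟩⟩

lemma summable_pow_mul_pow_div {N : ℕ} (hN : 0 < N) {r : ℝ} (hr0 : 0 < r) (hr1 : r < 1)
    (d : ℕ) : Summable fun n : ℕ => (n : ℝ) ^ d * r ^ (n / N) := by
  set s : ℝ := r ^ (N : ℝ)⁻¹
  have hs0 : 0 < s := Real.rpow_pos_of_pos hr0 _
  have hs1 : s < 1 := Real.rpow_lt_one hr0.le hr1 (by positivity)
  have hsN : s ^ N = r := Real.rpow_inv_natCast_pow hr0.le hN.ne'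
  have hpow (n : ℕ) : r ^ (n / N) ≤ r⁻¹ * s ^ n := by
    rw [← div_eq_inv_mul, le_div_iff₀ hr0, ← pow_succ, ← hsN, ← pow_mul]
    exact pow_le_pow_of_le_one hs0.le hs1.le (Nat.lt_mul_div_succ n hN).le
  refine Summable.of_nonneg_of_le (fun n => by positivity) (fun n => ?_)
    ((summable_pow_mul_geometric_of_norm_lt_one d
      (by rwa [Real.norm_of_nonneg hs0.le])).mul_left r⁻¹)
  rw [mul_left_comm]
  exact mul_le_mul_of_nonneg_left (hpow n) (by positivity)

lemma tsum_two_mul_add_one_mul_pow_div_lt_top {N : ℕ} (hN : 0 < N) {r : ℝ} (hr0 : 0 < r)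
    (hr1 : r < 1) :
    ∑' n : ℕ, ((2 * n + 1 : ℕ) : ℝ≥0∞) * ENNReal.ofReal (r ^ (n / N)) < ⊤ := by
  have hsum : Summable fun n : ℕ => ((2 * n + 1 : ℕ) : ℝ) * r ^ (n / N) := by
    refine (((summable_pow_mul_pow_div hN hr0 hr1 1).mul_left 2).add
      (summable_pow_mul_pow_div hN hr0 hr1 0)).congr fun n => ?_
    push_cast
    ring
  convert hsum.tsum_ofReal_lt_top using 3 with n
  rw [ENNReal.ofReal_mul (Nat.cast_nonneg _), ENNReal.ofReal_natCast]

theorem stmt17_general {X Ω ι : Type*} [Fintype X] [DecidableEq X] [MeasurableSpace Ω]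
    {l : Filter ι} {P : ι → Matrix X X ℝ} {η : ι → ℕ → Ω → X} {μ : ι → X → Measure Ω}
    (h : ∀ᶠ ε in l, IsMarkovFamily (P ε) (η ε) (μ ε))
    {N : ℕ} (hN : 0 < N) {c : ℕ → X} (hring : c N = c 0) (hall : ∀ i, ∃ k ≤ N, c k = i)
    (hliminf : ∀ k < N, 0 < liminf (fun ε => P ε (c k) (c (k + 1))) l) :
    ∃ p ∈ Ioo (0 : ℝ) 1, ∃ K < (⊤ : ℝ≥0∞), ∀ᶠ ε in l, ∀ i j : X,
      (∀ k : ℕ, μ ε i {ω | ∀ n, 1 ≤ n → n ≤ k * N → η ε n ω ≠ j}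
        ≤ ENNReal.ofReal ((1 - p) ^ k)) ∧
      ∑' n : ℕ, ((2 * n + 1 : ℕ) : ℝ≥0∞) *
        μ ε i {ω | ∀ k, 1 ≤ k → k ≤ n → η ε k ω ≠ j} ≤ K := by
  have hedges : ∀ᶠ δ in 𝓝[>] (0 : ℝ), ∀ᶠ ε in l, ∀ k ∈ Finset.range N,
      δ ≤ P ε (c k) (c (k + 1)) :=
    eventually_nhdsGT_eventually_le_of_lt_liminf _
      (fun k _ => isBoundedUnder_of_eventually_ge (h.mono fun ε hε => hε.stochastic.1 _ _))
      (fun k hk => hliminf k (Finset.mem_range.1 hk))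
  obtain ⟨δ, hδ, hδ0, hδ1⟩ := (hedges.and (Ioo_mem_nhdsGT one_pos)).exists
  have hp : δ ^ N ∈ Ioo (0 : ℝ) 1 := ⟨pow_pos hδ0 N, pow_lt_one₀ hδ0.le hδ1 hN.ne'⟩
  refine ⟨δ ^ N, hp, _,
    tsum_two_mul_add_one_mul_pow_div_lt_top hN (sub_pos.2 hp.2) (sub_lt_self 1 hp.1), ?_⟩
  filter_upwards [h, hδ] with ε hε hc i j
  have htail := hε.measure_avoid_le_of_ringChain hδ0.le hN hring hall
    (fun k hk => hc k (Finset.mem_range.2 hk)) i j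
  refine ⟨fun k => ?_, ENNReal.tsum_le_tsum fun n => mul_le_mul_right (htail n) _⟩
  simpa only [Nat.mul_div_cancel k hN] using htail (k * N)

/-- under condition B (given here by an explicit ring chain
`c 0, c 1, …, c N = c 0` containing all states, with
`liminf_{ε→0+} p ε (c (k-1)) (c k) > 0` for `k = 1, …, N`), there exist `p ∈ (0,1)` and
`ε_p ∈ (0, ε₀]` such that the first hitting times `α_{ε,j}` satisfy the geometric tail
bound `P_i(α_{ε,j} > kN) ≤ (1 − p)^k`, and consequently the second moments
`E_i α_{ε,j}² = Σ_{n≥0} (2n+1) P_i(α_{ε,j} > n)` are bounded by a finite constant `K_p`,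
uniformly in `ε ∈ (0, ε_p]` and `i, j ∈ X`.  Here `{α_{ε,j} > n}` is the event that the
chain does not visit `j` at any of the times `1, …, n`. -/
theorem stmt17 {m : ℕ} (hm : 0 < m) (ε₀ : ℝ) (hε₀ : 0 < ε₀)
    {Ω : Type} [MeasurableSpace Ω]
    (η : ℝ → ℕ → Ω → Fin m)
    (Pstart : ℝ → Fin m → Measure Ω)
    (hprob : ∀ ε i, IsProbabilityMeasure (Pstart ε i))
    (hmeas : ∀ ε n, Measurable (η ε n))
    (p : ℝ → Fin m → Fin m → ℝ)
    (hpnn : ∀ ε ∈ Ioc (0:ℝ) ε₀, (∀ i j, 0 ≤ p ε i j) ∧ ∀ i, ∑ j, p ε i j = 1)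
    -- Markov chain structure with transition probabilities p_{ε,ij}
    (hMC : ∀ ε ∈ Ioc (0:ℝ) ε₀, ∀ n : ℕ, ∀ I : ℕ → Fin m,
      Pstart ε (I 0) {ω | ∀ k ≤ n, η ε k ω = I k}
        = ENNReal.ofReal (∏ k ∈ Finset.Icc 1 n, p ε (I (k - 1)) (I k)))
    -- condition B, with an explicit ring chain c 0, …, c N = c 0
    (N : ℕ) (hN : 0 < N) (c : ℕ → Fin m) (hring : c N = c 0)
    (hall : ∀ i : Fin m, ∃ k ≤ N, c k = i)
    (hliminf : ∀ k < N,
      0 < Filter.liminf (fun ε => p ε (c k) (c (k + 1))) (𝓝[>] (0 : ℝ))) :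
    ∃ pr : ℝ, 0 < pr ∧ pr < 1 ∧ ∃ εp ∈ Ioc (0:ℝ) ε₀,
      -- geometric tail bound for the first hitting times
      (∀ ε ∈ Ioc (0:ℝ) εp, ∀ i j : Fin m, ∀ k : ℕ, 1 ≤ k →
        Pstart ε i {ω | ∀ n : ℕ, 1 ≤ n → n ≤ k * N → η ε n ω ≠ j}
          ≤ ENNReal.ofReal ((1 - pr) ^ k)) ∧
      -- uniformly bounded second moments of the first hitting times
      ∃ Kp : ℝ≥0∞, Kp < ⊤ ∧ ∀ ε ∈ Ioc (0:ℝ) εp, ∀ i j : Fin m,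
        ∑' n : ℕ, ((2 * n + 1 : ℕ) : ℝ≥0∞) *
          Pstart ε i {ω | ∀ k : ℕ, 1 ≤ k → k ≤ n → η ε k ω ≠ j} ≤ Kp := by
  have hchain : ∀ᶠ ε in 𝓝[>] (0 : ℝ), IsMarkovFamily (p ε) (η ε) (Pstart ε) :=
    Eventually.mono (Ioc_mem_nhdsGT hε₀) fun ε hε =>
      .of_cylinder (hmeas ε 0) (Matrix.mem_rowStochastic_iff_sum.2 (hpnn ε hε)) (hMC ε hε)
  obtain ⟨pr, hpr, K, hK, hev⟩ := stmt17_general hchain hN hring hall hliminf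
  obtain ⟨εp, hεp, hbound⟩ := exists_mem_Ioc_forall_of_eventually_nhdsGT hε₀ hev
  exact ⟨pr, hpr.1, hpr.2, εp, hεp, fun ε hε i j k _ => (hbound ε hε i j).1 k,
    K, hK, fun ε hε i j => (hbound ε hε i j).2⟩
end
end
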